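/- Let n ≥ 2, let 2 ≤ k ≤ n be an integer, let p ≥ (n−k+2)/(n−k+1), let ε > 0 and A ∈ ℕ. Suppose that for every β ∈ (0,1) there is a constant C_β > 0 such that for all 0 < δ < β, all finite direction-separated families 𝕋 of δ-tubes in ℝⁿ and all choices of cap partition, ‖Σ_{T∈𝕋} χ_T‖_{BL^p_{k,A}(ℝⁿ)} ≤ C_β · δ^{−(n−1−n/p)−ε} · (Σ_{T∈𝕋} |T|)^{1/p}. Then there is a constant C > 0 (depending on n, p, k, ε, A and the constants C_β) such that for all 0 < δ < 1 and all finite direction-separated families 𝕋 of δ-tubes in ℝⁿ, ‖Σ_{T∈𝕋} χ_T‖_{L^p(ℝⁿ)} ≤ C · δ^{−(n−1−n/p)−ε} · (Σ_{T∈𝕋} |T|)^{1/p}. -/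

import Mathlib

open MeasureTheory Metric InnerProductGeometry
open scoped RealInnerProductSpace ENNReal NNReal

noncomputable section

/-- Euclidean space ℝⁿ. -/
abbrev Esp (n : ℕ) : Type := EuclideanSpace ℝ (Fin n)

/-- The δ-tube with centre `a` and unit direction `v`. -/
def tube (n : ℕ) (δ : ℝ) (a v : Esp n) : Set (Esp n) :=
  {x | |⟪x - a, v⟫| ≤ 1 / 2 ∧ ‖(x - a) - ⟪x - a, v⟫ • v‖ ≤ δ}

/-- Unsigned angle between a vector and a linear subspace: the infimum of the angles
between `v` and the nonzero elements of `V`. -/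
def angleSub {n : ℕ} (v : Esp n) (V : Submodule ℝ (Esp n)) : ℝ :=
  ⨅ w : {w : Esp n // w ∈ V ∧ w ≠ 0}, angle v w.1

/-- Angle between the cap of radius β centred at ω and a subspace. -/
def angleCap {n : ℕ} (β : ℝ) (ω : Esp n) (V : Submodule ℝ (Esp n)) : ℝ :=
  ⨅ u : {u : Esp n // ‖u‖ = 1 ∧ ‖u - ω‖ < β}, angleSub u.1 V

/-- `W` is a maximal β-separated subset of the unit sphere (maximality being expressed by
the fact that every unit vector lies in the cap around some element of `W`). -/
def MaximalSeparated (n : ℕ) (β : ℝ) (W : Set (Esp n)) : Prop :=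
  (∀ ω ∈ W, ‖ω‖ = 1) ∧
  (∀ ω ∈ W, ∀ ω' ∈ W, ω ≠ ω' → β ≤ ‖ω - ω'‖) ∧
  (∀ u : Esp n, ‖u‖ = 1 → ∃ ω ∈ W, ‖u - ω‖ < β)

/-- The quantity μ_𝕋(B) in the definition of the k-broad norm, for the δ-ball centred
at `c`.  The family 𝕋 of tubes is `T : ι → Set (Esp n)`, and `ω i ∈ W` is the centre of
the cap containing the direction of the tube `T i` (so the cap partition is
𝕋[τ_{ω₀}] = {T i : ω i = ω₀}). -/
def broadMu (n k A : ℕ) (p β δ : ℝ) (W : Set (Esp n)) {ι : Type} [Fintype ι]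
    (T : ι → Set (Esp n)) (ω : ι → Esp n) (c : Esp n) : ℝ≥0∞ :=
  ⨅ V : {V : Fin A → Submodule ℝ (Esp n) // ∀ a, Module.finrank ℝ (V a) = k - 1},
    ⨆ ω₀ : {ω₀ : Esp n // ω₀ ∈ W ∧ ∀ a, β < angleCap β ω₀ (V.1 a)},
      ∫⁻ x in ball c δ,
        (∑' i : {i : ι // ω i = ω₀.1}, Set.indicator (T i.1) (fun _ => (1 : ℝ≥0∞)) x) ^ p

/-- The k-broad norm ‖Σ_{T∈𝕋} χ_T‖_{BL^p_{k,A}(U)}, relative to a family of δ-balls with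
centres `b j`, a set `W` of cap centres and a cap assignment `ω` for the tubes `T`. -/
def broadNorm (n k A : ℕ) (p β δ : ℝ) (W : Set (Esp n)) {ι : Type} [Fintype ι]
    (T : ι → Set (Esp n)) (ω : ι → Esp n) (b : ℕ → Esp n) (U : Set (Esp n)) : ℝ≥0∞ :=
  (∑' j : ℕ, volume (ball (b j) δ ∩ U) / volume (ball (b j) δ) *
      broadMu n k A p β δ W T ω (b j)) ^ (1 / p)

/-- A finitely-overlapping cover of ℝⁿ by δ-balls. -/
def FinOverlapCover (n : ℕ) (δ : ℝ) (b : ℕ → Esp n) : Prop :=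
  (∀ x : Esp n, ∃ j, x ∈ ball (b j) δ) ∧
  (∀ x : Esp n, {j : ℕ | x ∈ ball (b j) δ}.Finite ∧ {j : ℕ | x ∈ ball (b j) δ}.ncard ≤ 5 ^ n)

/-!
On each `δ`-ball, the caps making an angle larger than `β` with all the `(k - 1)`-dimensional
subspaces optimal for that ball are controlled by the `k`-broad term, at the cost of a factor that
depends only on `β`. The remaining, narrow caps number only `O(β ^ (-(k - 2)))`, so Hölder's
inequality bounds their contribution by the sum over caps of the `p`-th powers, up to a factor
`O(β ^ (-(k - 2) * (p - 1)))`. A linear map that stretches a cap of radius `β` to unit size turns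
its `δ`-tubes into direction-separated tubes of width comparable to `δ / β`, so that this sum is
governed by the linear estimate at the coarser scale. If the loss in the linear estimate, raised to
the power `p`, is `δ ^ (p * γ)`, then passing to the coarser scale gains `β ^ (-(p * γ))`. As soon
as `-(p * γ) > (k - 2) * (p - 1)`, which for `γ = -(n - 1 - n / p) - ε` follows from
`p ≥ (n - k + 2) / (n - k + 1)`, this gain beats the loss on the narrow caps once `β` is small, and
induction on scales closes.
-/

/-! ### Overlap functions -/

section Overlap

variable {α ι κ : Type*}

/-- The overlap function `∑ χ_{T i}` of a family of sets. It takes values in `[0, ∞]` and is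
given by an infinite sum, so that no finiteness of the family is required. -/
def overlap (T : ι → Set α) (x : α) : ℝ≥0∞ :=
  ∑' i, (T i).indicator (fun _ => 1) x

theorem overlap_le_overlap {T : ι → Set α} {β : Type*} {T' : ι → Set β} {x : α} {y : β}
    (h : ∀ i, x ∈ T i → y ∈ T' i) : overlap T x ≤ overlap T' y := by
  refine ENNReal.tsum_le_tsum fun i => ?_
  by_cases hx : x ∈ T i
  · rw [Set.indicator_of_mem hx, Set.indicator_of_mem (h i hx)]
  · rw [Set.indicator_of_notMem hx]
    exact zero_le

theorem overlap_comp_equiv (e : κ ≃ ι) (T : ι → Set α) (x : α) :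
    overlap (T ∘ e) x = overlap T x :=
  e.tsum_eq fun i => (T i).indicator (fun _ => 1) x

theorem overlap_eq_encard (T : ι → Set α) (x : α) :
    overlap T x = ({i | x ∈ T i}.encard : ℝ≥0∞) := by
  rw [← ENNReal.tsum_set_one, tsum_subtype {i | x ∈ T i} fun _ => (1 : ℝ≥0∞)]
  rfl

theorem tsum_eq_sum_tsum_fiber (g : ι → ℝ≥0∞) {f : ι → κ} {s : Finset κ}
    (hf : ∀ i, f i ∈ s) : ∑' i, g i = ∑ c ∈ s, ∑' i : {i // f i = c}, g i := by
  rw [← ENNReal.tsum_fiberwise g f, tsum_eq_sum fun c hc => ?_]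
  · rfl
  · have : IsEmpty (f ⁻¹' {c}) := ⟨fun i => hc (i.2 ▸ hf i)⟩
    exact tsum_empty

theorem overlap_eq_sum_fiber (T : ι → Set α) {f : ι → κ} {s : Finset κ} (hf : ∀ i, f i ∈ s)
    (x : α) : overlap T x = ∑ c ∈ s, overlap (fun i : {i // f i = c} => T i) x :=
  tsum_eq_sum_tsum_fiber _ hf

theorem overlap_rpow_le_card_rpow_mul [Fintype ι] (T : ι → Set α) {p : ℝ} (hp : 1 ≤ p) (x : α) :
    overlap T x ^ p ≤ (Fintype.card ι : ℝ≥0∞) ^ (p - 1) * overlap T x := by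
  simp only [overlap, tsum_fintype]
  refine (ENNReal.rpow_sum_le_const_mul_sum_rpow _ _ hp).trans_eq ?_
  congr 1
  refine Finset.sum_congr rfl fun i _ => ?_
  by_cases hx : x ∈ T i <;> simp [hx, zero_lt_one.trans_le hp]

variable [MeasurableSpace α] {μ : Measure α}

theorem measurable_overlap [Countable ι] {T : ι → Set α} (hT : ∀ i, MeasurableSet (T i)) :
    Measurable (overlap T) :=
  .tsum fun i => measurable_const.indicator (hT i)

theorem lintegral_overlap_mul [Countable ι] {T : ι → Set α} (hT : ∀ i, MeasurableSet (T i))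
    {g : α → ℝ≥0∞} (hg : Measurable g) :
    ∫⁻ x, overlap T x * g x ∂μ = ∑' i, ∫⁻ x in T i, g x ∂μ := by
  simp only [overlap, ← ENNReal.tsum_mul_right, ← Set.indicator_mul_left, one_mul]
  rw [lintegral_tsum fun i => (hg.indicator (hT i)).aemeasurable]
  exact tsum_congr fun i => lintegral_indicator (hT i) g

theorem lintegral_overlap [Countable ι] {T : ι → Set α} (hT : ∀ i, MeasurableSet (T i)) :
    ∫⁻ x, overlap T x ∂μ = ∑' i, μ (T i) := by
  simpa using lintegral_overlap_mul (μ := μ) hT measurable_one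

theorem eLpNorm_sum_indicator [Fintype ι] (T : ι → Set α) {p : ℝ} (hp : 0 < p) :
    eLpNorm (fun x => ∑ i, (T i).indicator (fun _ => (1 : ℝ)) x) (ENNReal.ofReal p) μ =
      (∫⁻ x, overlap T x ^ p ∂μ) ^ (1 / p) := by
  rw [eLpNorm_eq_lintegral_rpow_enorm_toReal (by simpa using hp) ENNReal.ofReal_ne_top,
    ENNReal.toReal_ofReal hp.le]
  congr! 4 with x
  have hnonneg : ∀ i, 0 ≤ (T i).indicator (fun _ => (1 : ℝ)) x := fun i =>
    Set.indicator_nonneg (fun _ _ => zero_le_one) x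
  rw [Real.enorm_of_nonneg (Finset.sum_nonneg fun i _ => hnonneg i),
    ENNReal.ofReal_sum_of_nonneg fun i _ => hnonneg i, overlap, tsum_fintype]
  refine Finset.sum_congr rfl fun i _ => ?_
  by_cases hx : x ∈ T i <;> simp [hx]

end Overlap

/-! ### Packing -/

/-- A family of points at mutual distance at least `r`. Unlike `Metric.IsSeparated`, equality is
allowed, as in the definition of a direction-separated family of tubes. -/
def PairwiseSeparated {ι X : Type*} [PseudoMetricSpace X] (r : ℝ) (x : ι → X) : Prop :=
  Pairwise fun i j => r ≤ dist (x i) (x j)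

section Packing

variable {ι κ X : Type*}

theorem exists_separated_net [PseudoMetricSpace X] (S : Set X) {r : ℝ} (hr : 0 < r) :
    ∃ N ⊆ S, PairwiseSeparated r ((↑) : N → X) ∧ ∀ x ∈ S, ∃ y ∈ N, dist x y < r := by
  have : Std.Symm fun x y : X => r ≤ dist x y := ⟨fun x y h => dist_comm x y ▸ h⟩
  obtain ⟨N, hN⟩ := zorn_subset {N : Set X | N ⊆ S ∧ N.Pairwise fun x y => r ≤ dist x y}
    fun c hc hchain => ⟨⋃₀ c, ⟨Set.sUnion_subset fun s hs => (hc hs).1,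
      (Set.pairwise_sUnion hchain.directedOn).2 fun s hs => (hc hs).2⟩,
      fun s hs => Set.subset_sUnion_of_mem hs⟩
  refine ⟨N, hN.prop.1, (pairwise_subtype_iff_pairwise_set N _).2 hN.prop.2, fun x hx => ?_⟩
  by_contra! hfar
  have hxN : x ∈ N := hN.le_of_ge ⟨Set.insert_subset hx hN.prop.1,
    Set.pairwise_insert_of_symm.2 ⟨hN.prop.2, fun y hy _ => hfar y hy⟩⟩
    (Set.subset_insert x N) (Set.mem_insert x N)
  exact hr.not_ge ((hfar x hxN).trans_eq (dist_self x))

theorem infinite_of_forall_exists_dist_lt [PseudoMetricSpace X] {N : Set X} {r : ℝ}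
    (hX : ¬ Bornology.IsBounded (Set.univ : Set X)) (hN : ∀ x, ∃ y ∈ N, dist x y < r) :
    N.Infinite := fun hfin =>
  hX (((Bornology.isBounded_biUnion hfin).2 fun y _ => isBounded_ball (x := y) (r := r)).subset
    fun x _ => Set.mem_iUnion₂.2 (by simpa using hN x))

section Shell

variable {F : Type*} [NormedAddCommGroup F] {r : ℝ}

theorem ball_half_subset_shell {y : F} (hy : ‖y‖ = 1) :
    ball y (r / 2) ⊆ ball 0 (1 + r / 2) \ ball 0 (1 - r / 2) := by
  intro z hz
  have hupper := norm_sub_norm_le z y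
  have hlower := norm_sub_norm_le y z
  rw [mem_ball, dist_eq_norm] at hz
  rw [norm_sub_rev] at hlower
  rw [Set.mem_sdiff, mem_ball_zero_iff, mem_ball_zero_iff]
  constructor <;> linarith

theorem measure_shell_le [NormedSpace ℝ F] [FiniteDimensional ℝ F] [MeasurableSpace F]
    [BorelSpace F] (μ : Measure F) [μ.IsAddHaarMeasure] (hr : 0 < r) (hr1 : r ≤ 1) :
    μ (ball (0 : F) (1 + r / 2) \ ball 0 (1 - r / 2)) ≤ ENNReal.ofReal
      (r * Module.finrank ℝ F * 2 ^ (Module.finrank ℝ F - 1)) * μ (ball 0 1) := by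
  rw [measure_sdiff (ball_subset_ball (by linarith)) measurableSet_ball.nullMeasurableSet
      measure_ball_lt_top.ne,
    Measure.addHaar_ball_of_pos μ 0 (by linarith : 0 < 1 + r / 2),
    Measure.addHaar_ball_of_pos μ 0 (by linarith : 0 < 1 - r / 2),
    ← ENNReal.sub_mul fun _ _ => measure_ball_lt_top.ne,
    ← ENNReal.ofReal_sub _ (pow_nonneg (by linarith) _)]
  gcongr
  set d := Module.finrank ℝ F
  calc (1 + r / 2) ^ d - (1 - r / 2) ^ d
      ≤ |1 + r / 2 - (1 - r / 2)| * d * max |1 + r / 2| |1 - r / 2| ^ (d - 1) :=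
        (le_abs_self _).trans (abs_pow_sub_pow_le _ _ _)
    _ ≤ r * d * 2 ^ (d - 1) := by
        rw [show 1 + r / 2 - (1 - r / 2) = r by ring, abs_of_pos hr]
        gcongr
        exact max_le (abs_le.2 ⟨by linarith, by linarith⟩) (abs_le.2 ⟨by linarith, by linarith⟩)

end Shell

namespace PairwiseSeparated

section PseudoMetricSpace

variable [PseudoMetricSpace X] {x : ι → X} {r : ℝ}

theorem comp_injective (hx : PairwiseSeparated r x) {f : κ → ι} (hf : f.Injective) :
    PairwiseSeparated r (x ∘ f) :=
  hx.comp_of_injective hf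

theorem mono {s : ℝ} (hx : PairwiseSeparated r x) (hsr : s ≤ r) : PairwiseSeparated s x :=
  fun _ _ hij => hsr.trans (hx hij)

theorem pairwise_disjoint_ball (hx : PairwiseSeparated r x) :
    Pairwise (Function.onFun Disjoint fun i => ball (x i) (r / 2)) :=
  fun _ _ hij => ball_disjoint_ball ((add_halves r).trans_le (hx hij))

theorem countable [TopologicalSpace.SeparableSpace X] (hx : PairwiseSeparated r x) (hr : 0 < r) :
    Countable ι :=
  hx.pairwise_disjoint_ball.countable_of_isOpen_disjoint (fun _ => isOpen_ball)
    fun i => ⟨x i, mem_ball_self (half_pos hr)⟩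

end PseudoMetricSpace

variable {F : Type*} [NormedAddCommGroup F] {x : ι → F} {r : ℝ}

theorem card_mul_measure_ball_le [MeasurableSpace F] [BorelSpace F] (μ : Measure F)
    [μ.IsAddHaarMeasure] (hx : PairwiseSeparated r x) {U : Set F}
    (hU : ∀ i, ball (x i) (r / 2) ⊆ U) : ENat.card ι * μ (ball 0 (r / 2)) ≤ μ U := by
  calc ENat.card ι * μ (ball 0 (r / 2)) = ∑' i, μ (ball (x i) (r / 2)) := by
        simp only [Measure.addHaar_ball_center, ENNReal.tsum_const]
    _ ≤ μ (⋃ i, ball (x i) (r / 2)) :=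
        tsum_meas_le_meas_iUnion_of_disjoint μ (fun _ => measurableSet_ball)
          hx.pairwise_disjoint_ball
    _ ≤ μ U := measure_mono (Set.iUnion_subset hU)

variable [NormedSpace ℝ F] [FiniteDimensional ℝ F]

theorem card_le_of_dist_le (hx : PairwiseSeparated r x) (hr : 0 < r) {c : F} {M : ℝ≥0}
    (hc : ∀ i, dist (x i) c ≤ M * r) :
    (ENat.card ι : ℝ≥0∞) ≤ (2 * M + 1) ^ Module.finrank ℝ F := by
  borelize F
  let μ : Measure F := Measure.addHaar
  have hsub : ∀ i, ball (x i) (r / 2) ⊆ ball c ((2 * M + 1 : ℝ≥0) * (r / 2)) := fun i =>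
    ball_subset_ball' (by push_cast; linarith [hc i])
  have hcard := hx.card_mul_measure_ball_le μ hsub
  rw [Measure.addHaar_ball_mul_of_pos μ c (by positivity), ENNReal.ofReal_pow (by positivity),
    ENNReal.ofReal_coe_nnreal] at hcard
  refine (ENNReal.mul_le_mul_iff_left (measure_ball_pos μ 0 (half_pos hr)).ne'
    measure_ball_lt_top.ne).1 (hcard.trans_eq ?_)
  push_cast
  rfl

theorem card_le_of_norm_le_one (hx : PairwiseSeparated r x) (hr : 0 < r) (hnorm : ∀ i, ‖x i‖ ≤ 1) :
    (ENat.card ι : ℝ≥0∞) ≤ ENNReal.ofReal ((2 * r⁻¹ + 1) ^ Module.finrank ℝ F) := by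
  have hM : (r⁻¹.toNNReal : ℝ) = r⁻¹ := Real.coe_toNNReal _ (by positivity)
  refine (hx.card_le_of_dist_le hr (c := 0) (M := r⁻¹.toNNReal) fun i => ?_).trans_eq ?_
  · rw [dist_zero_right, hM, inv_mul_cancel₀ hr.ne']
    exact hnorm i
  · rw [← ENNReal.ofReal_coe_nnreal, hM, ENNReal.ofReal_pow (by positivity),
      ENNReal.ofReal_add (by positivity) zero_le_one, ENNReal.ofReal_mul zero_le_two]
    norm_num

theorem card_le_of_norm_eq_one (hx : PairwiseSeparated r x) (hr : 0 < r) (hr1 : r ≤ 1)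
    (hnorm : ∀ i, ‖x i‖ = 1) : (ENat.card ι : ℝ≥0∞) ≤ ENNReal.ofReal
      (Module.finrank ℝ F * 4 ^ Module.finrank ℝ F * r⁻¹ ^ (Module.finrank ℝ F - 1)) := by
  borelize F
  let μ : Measure F := Measure.addHaar
  have hcard := (hx.card_mul_measure_ball_le μ fun i => ball_half_subset_shell (hnorm i)).trans
    (measure_shell_le μ hr hr1)
  rw [Measure.addHaar_ball_of_pos μ _ (half_pos hr), ← mul_assoc, ENNReal.mul_le_mul_iff_left
    (measure_ball_pos μ 0 one_pos).ne' measure_ball_lt_top.ne] at hcard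
  refine (ENNReal.mul_le_mul_iff_left (ENNReal.ofReal_pos.2 (by positivity)).ne'
    ENNReal.ofReal_ne_top).1 (hcard.trans ?_)
  rw [← ENNReal.ofReal_mul (by positivity)]
  refine ENNReal.ofReal_le_ofReal ?_
  rcases Module.finrank ℝ F with _ | d
  · simp
  · rw [Nat.add_sub_cancel]
    calc r * (d + 1 : ℕ) * 2 ^ d ≤ 2 * (r * (d + 1 : ℕ) * 2 ^ d) :=
          le_mul_of_one_le_left (by positivity) one_le_two
      _ = (d + 1 : ℕ) * 4 ^ (d + 1) * r⁻¹ ^ d * (r / 2) ^ (d + 1) := by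
          rw [show (4 : ℝ) = 2 * 2 by norm_num, inv_pow, div_pow, mul_pow]
          field_simp
          ring

end PairwiseSeparated

end Packing

section Covers

variable {n : ℕ} {δ β : ℝ}

theorem exists_finOverlapCover (hn : 0 < n) (hδ : 0 < δ) :
    ∃ b : ℕ → Esp n, FinOverlapCover n δ b := by
  have : NeZero n := ⟨hn.ne'⟩
  obtain ⟨N, -, hN, hcover⟩ := exists_separated_net (Set.univ : Set (Esp n)) hδ
  have : Countable N := hN.countable hδ
  have : Infinite N := (infinite_of_forall_exists_dist_lt
    (NormedSpace.unbounded_univ ℝ (Esp n)) fun x => hcover x trivial).to_subtype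
  obtain ⟨e⟩ := nonempty_equiv_of_countable (α := ℕ) (β := N)
  refine ⟨fun j => e j, fun x => ?_, fun x => ?_⟩
  · obtain ⟨y, hy, hxy⟩ := hcover x trivial
    exact ⟨e.symm ⟨y, hy⟩, by simpa using hxy⟩
  · have hsep : PairwiseSeparated δ fun j : {j | x ∈ ball (e j : Esp n) δ} => (e j : Esp n) :=
      hN.comp_injective (e.injective.comp Subtype.val_injective)
    have hcard := hsep.card_le_of_dist_le hδ (c := x) (M := 2) fun j => by
      have hj : dist x (e j) < δ := j.2
      rw [dist_comm, NNReal.coe_ofNat]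
      linarith
    rw [ENat.card_coe_set_eq, finrank_euclideanSpace_fin, ENNReal.coe_ofNat,
      show (2 * 2 + 1 : ℝ≥0∞) ^ n = ((5 ^ n : ℕ) : ℕ∞) by norm_num, ENat.toENNReal_le] at hcard
    exact Set.encard_le_coe_iff_finite_ncard_le.1 hcard

namespace FinOverlapCover

variable {b : ℕ → Esp n}

theorem overlap_le (hb : FinOverlapCover n δ b) (x : Esp n) :
    overlap (fun j => ball (b j) δ) x ≤ 5 ^ n := by
  have hcard : {j | x ∈ ball (b j) δ}.encard ≤ (5 ^ n : ℕ) :=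
    Set.encard_le_coe_iff_finite_ncard_le.2 (hb.2 x)
  rw [overlap_eq_encard]
  exact (ENat.toENNReal_le.2 hcard).trans_eq (by norm_num)

theorem tsum_lintegral_ball_le (hb : FinOverlapCover n δ b) {g : Esp n → ℝ≥0∞}
    (hg : Measurable g) : ∑' j, ∫⁻ x in ball (b j) δ, g x ≤ 5 ^ n * ∫⁻ x, g x := by
  rw [← lintegral_overlap_mul (fun _ => measurableSet_ball) hg, ← lintegral_const_mul _ hg]
  exact lintegral_mono fun x => by gcongr; exact hb.overlap_le x

theorem lintegral_le_tsum_lintegral_ball (hb : FinOverlapCover n δ b) (g : Esp n → ℝ≥0∞) :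
    ∫⁻ x, g x ≤ ∑' j, ∫⁻ x in ball (b j) δ, g x := by
  have hunion : (⋃ j, ball (b j) δ) = Set.univ :=
    Set.eq_univ_of_forall fun x => Set.mem_iUnion.2 (hb.1 x)
  rw [← setLIntegral_univ, ← hunion]
  exact lintegral_iUnion_le _ g

end FinOverlapCover

theorem exists_maximalSeparated (n : ℕ) (hβ : 0 < β) :
    ∃ W : Set (Esp n), MaximalSeparated n β W := by
  obtain ⟨W, hW, hsep, hcover⟩ := exists_separated_net {u : Esp n | ‖u‖ = 1} hβ
  simp only [dist_eq_norm] at hcover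
  refine ⟨W, fun ω hω => hW hω, fun ω hω ω' hω' hne => ?_, hcover⟩
  rw [← dist_eq_norm]
  exact @hsep ⟨ω, hω⟩ ⟨ω', hω'⟩ (Subtype.coe_ne_coe.1 hne)

namespace MaximalSeparated

variable {W : Set (Esp n)}

theorem pairwiseSeparated (hW : MaximalSeparated n β W) :
    PairwiseSeparated β ((↑) : W → Esp n) := fun ω ω' hne => by
  rw [← Subtype.coe_ne_coe] at hne
  exact (hW.2.1 ω ω.2 ω' ω'.2 hne).trans_eq (dist_eq_norm _ _).symm

theorem encard_le (hW : MaximalSeparated n β W) (hβ : 0 < β) :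
    (W.encard : ℝ≥0∞) ≤ ENNReal.ofReal ((2 * β⁻¹ + 1) ^ n) := by
  have hcard := hW.pairwiseSeparated.card_le_of_norm_le_one hβ fun ω => (hW.1 ω ω.2).le
  rwa [ENat.card_coe_set_eq, finrank_euclideanSpace_fin] at hcard

theorem finite (hW : MaximalSeparated n β W) (hβ : 0 < β) : W.Finite :=
  Set.encard_lt_top_iff.1
    (ENat.toENNReal_lt_top.1 ((hW.encard_le hβ).trans_lt ENNReal.ofReal_lt_top))

end MaximalSeparated

end Covers

/-! ### Axial scalings and tubes -/

section AxialScale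

variable {E : Type*} [NormedAddCommGroup E] [InnerProductSpace ℝ E]

/-- The linear map that, for a unit vector `ω`, scales by `α` along `ω` and by `γ` orthogonally
to `ω`. -/
def axialScale (ω : E) (α γ : ℝ) : E →L[ℝ] E :=
  γ • ContinuousLinearMap.id ℝ E + (α - γ) • (innerSL ℝ ω).smulRight ω

variable {ω : E} {α γ : ℝ}

theorem axialScale_apply (ω : E) (α γ : ℝ) (x : E) :
    axialScale ω α γ x = γ • x + ((α - γ) * ⟪ω, x⟫) • ω := by
  simp [axialScale, smul_smul]

theorem inner_axialScale (hω : ‖ω‖ = 1) (α γ : ℝ) (x : E) :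
    ⟪ω, axialScale ω α γ x⟫ = α * ⟪ω, x⟫ := by
  rw [axialScale_apply, inner_add_right, inner_smul_right, inner_smul_right,
    real_inner_self_eq_norm_sq, hω]
  ring

theorem norm_axialScale_sq (hω : ‖ω‖ = 1) (α γ : ℝ) (x : E) :
    ‖axialScale ω α γ x‖ ^ 2 = α ^ 2 * ⟪ω, x⟫ ^ 2 + γ ^ 2 * (‖x‖ ^ 2 - ⟪ω, x⟫ ^ 2) := by
  rw [axialScale_apply, norm_add_sq_real, norm_smul, norm_smul, hω, real_inner_smul_left,
    real_inner_smul_right, real_inner_comm, mul_pow, mul_pow]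
  simp only [Real.norm_eq_abs, sq_abs]
  ring

theorem norm_axialScale_le (hω : ‖ω‖ = 1) (hαγ : |α| ≤ γ) (x : E) :
    ‖axialScale ω α γ x‖ ≤ γ * ‖x‖ := by
  have hγ : 0 ≤ γ := (abs_nonneg α).trans hαγ
  have hsq : α ^ 2 ≤ γ ^ 2 := sq_le_sq.2 (hαγ.trans_eq (abs_of_nonneg hγ).symm)
  refine (sq_le_sq₀ (norm_nonneg _) (by positivity)).1 ?_
  rw [norm_axialScale_sq hω, mul_pow]
  linarith [mul_le_mul_of_nonneg_right hsq (sq_nonneg ⟪ω, x⟫)]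

theorem det_axialScale [FiniteDimensional ℝ E] (hω : ‖ω‖ = 1) (α : ℝ) (hγ : γ ≠ 0) :
    LinearMap.det (axialScale ω α γ : E →ₗ[ℝ] E) = α * γ ^ (Module.finrank ℝ E - 1) := by
  have : Nontrivial E := nontrivial_of_ne ω 0 (by simp [← norm_ne_zero_iff, hω])
  obtain ⟨d, hd⟩ := Nat.exists_eq_succ_of_ne_zero (Module.finrank_pos (R := ℝ) (M := E)).ne'
  have htransvection : (axialScale ω α γ : E →ₗ[ℝ] E) =
      γ • LinearMap.transvection (innerSL ℝ ω).toLinearMap ((α / γ - 1) • ω) := by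
    ext x
    simp only [ContinuousLinearMap.coe_coe, axialScale_apply, LinearMap.smul_apply,
      LinearMap.transvection.apply, innerSL_apply_apply, smul_add, smul_smul]
    congr 2
    field_simp
  rw [htransvection, LinearMap.det_smul, LinearMap.transvection.det, hd]
  simp only [ContinuousLinearMap.coe_coe, innerSL_apply_apply, real_inner_smul_right,
    real_inner_self_eq_norm_sq, hω, Nat.succ_sub_one, pow_succ]
  field_simp
  ring

end AxialScale

section Gnomonic

variable {E : Type*} [NormedAddCommGroup E] [InnerProductSpace ℝ E] {ω u v : E}

/-- The projection from the origin onto the affine hyperplane `⟪ω, ·⟫ = 1`; it is used to compare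
directions before and after an axial scaling, on which it acts as a homothety.  On vectors
orthogonal to `ω` it takes the junk value `0`. -/
def gnomonic (ω u : E) : E := ⟪ω, u⟫⁻¹ • u

theorem gnomonic_smul {c : ℝ} (hc : c ≠ 0) (ω u : E) : gnomonic ω (c • u) = gnomonic ω u := by
  rw [gnomonic, gnomonic, real_inner_smul_right, smul_smul, mul_inv_rev, inv_mul_cancel_right₀ hc]

theorem gnomonic_axialScale (hω : ‖ω‖ = 1) {α : ℝ} (hα : α ≠ 0) (γ : ℝ) (hu : ⟪ω, u⟫ ≠ 0) :
    gnomonic ω (axialScale ω α γ u) = (γ / α) • gnomonic ω u + ((α - γ) / α) • ω := by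
  rw [gnomonic, inner_axialScale hω, axialScale_apply, gnomonic, smul_add, smul_smul, smul_smul,
    smul_smul]
  congr 2 <;> field_simp

theorem norm_sub_le_norm_gnomonic_sub (hω : ‖ω‖ = 1) (hu : ‖u‖ = 1) (hv : ‖v‖ = 1)
    (hωu : 0 < ⟪ω, u⟫) (hωv : 0 < ⟪ω, v⟫) : ‖u - v‖ ≤ ‖gnomonic ω u - gnomonic ω v‖ := by
  have ha : 1 ≤ ⟪ω, u⟫⁻¹ := (one_le_inv₀ hωu).2 (by simpa [hω, hu] using real_inner_le_norm ω u)
  have hb : 1 ≤ ⟪ω, v⟫⁻¹ := (one_le_inv₀ hωv).2 (by simpa [hω, hv] using real_inner_le_norm ω v)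
  have hc : ⟪u, v⟫ ≤ 1 := by simpa [hu, hv] using real_inner_le_norm u v
  refine (sq_le_sq₀ (norm_nonneg _) (norm_nonneg _)).1 ?_
  rw [gnomonic, gnomonic, norm_sub_sq_real, norm_sub_sq_real, norm_smul, norm_smul,
    real_inner_smul_left, real_inner_smul_right, hu, hv]
  simp only [Real.norm_eq_abs, mul_one, sq_abs]
  nlinarith [sq_nonneg (⟪ω, u⟫⁻¹ - ⟪ω, v⟫⁻¹), mul_nonneg (sub_nonneg.2 hc)
    (sub_nonneg.2 (one_le_mul_of_one_le_of_one_le ha hb))]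

theorem norm_gnomonic_sub_le (hω : ‖ω‖ = 1) (hv : ‖v‖ = 1) {c : ℝ} (hc : 0 < c)
    (hcu : c ≤ ⟪ω, u⟫) (hcv : c ≤ ⟪ω, v⟫) :
    ‖gnomonic ω u - gnomonic ω v‖ ≤ (c⁻¹ + c⁻¹ ^ 2) * ‖u - v‖ := by
  have hu0 := hc.trans_le hcu
  have hv0 := hc.trans_le hcv
  have hsplit : gnomonic ω u - gnomonic ω v =
      ⟪ω, u⟫⁻¹ • (u - v) + (⟪ω, u⟫⁻¹ * ⟪ω, v⟫⁻¹ * ⟪ω, v - u⟫) • v := by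
    have hcoeff : ⟪ω, u⟫⁻¹ * ⟪ω, v⟫⁻¹ * ⟪ω, v - u⟫ = ⟪ω, u⟫⁻¹ - ⟪ω, v⟫⁻¹ := by
      rw [inner_sub_right]
      field_simp
    rw [hcoeff, gnomonic, gnomonic]
    module
  have hinner : |⟪ω, v - u⟫| ≤ ‖u - v‖ := by
    simpa [hω, norm_sub_rev] using abs_real_inner_le_norm ω (v - u)
  calc ‖gnomonic ω u - gnomonic ω v‖
      ≤ ⟪ω, u⟫⁻¹ * ‖u - v‖ + ⟪ω, u⟫⁻¹ * ⟪ω, v⟫⁻¹ * |⟪ω, v - u⟫| := by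
        rw [hsplit]
        refine (norm_add_le _ _).trans_eq ?_
        rw [norm_smul, norm_smul, hv, mul_one, norm_mul, Real.norm_of_nonneg (by positivity),
          Real.norm_of_nonneg (by positivity), Real.norm_eq_abs]
    _ ≤ c⁻¹ * ‖u - v‖ + c⁻¹ * c⁻¹ * ‖u - v‖ := by gcongr
    _ = (c⁻¹ + c⁻¹ ^ 2) * ‖u - v‖ := by ring

end Gnomonic

section Tubes

variable {n : ℕ} {δ : ℝ} {a v : Esp n}

theorem isClosed_tube (δ : ℝ) (a v : Esp n) : IsClosed (tube n δ a v) := by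
  have h1 : Continuous fun x : Esp n => |⟪x - a, v⟫| := by fun_prop
  have h2 : Continuous fun x : Esp n => ‖(x - a) - ⟪x - a, v⟫ • v‖ := by fun_prop
  exact (isClosed_le h1 continuous_const).inter (isClosed_le h2 continuous_const)

theorem measurableSet_tube (δ : ℝ) (a v : Esp n) : MeasurableSet (tube n δ a v) :=
  (isClosed_tube δ a v).measurableSet

theorem norm_sub_inner_smul_le {E : Type*} [NormedAddCommGroup E] [InnerProductSpace ℝ E] {v : E}
    (hv : ‖v‖ = 1) (x : E) : ‖x - ⟪x, v⟫ • v‖ ≤ ‖x‖ := by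
  refine (sq_le_sq₀ (norm_nonneg _) (norm_nonneg _)).1 ?_
  rw [norm_sub_sq_real, real_inner_smul_right, norm_smul, hv, mul_one, Real.norm_eq_abs, sq_abs]
  linarith [sq_nonneg ⟪x, v⟫]

theorem mem_tube_of_sub_eq (hv : ‖v‖ = 1) {x z : Esp n} {t : ℝ} (hx : x - a = t • v + z)
    (hz : ‖z‖ ≤ δ) (htz : |t| + ‖z‖ ≤ 1 / 2) : x ∈ tube n δ a v := by
  have hinner : ⟪t • v + z, v⟫ = t + ⟪z, v⟫ := by
    rw [inner_add_left, real_inner_smul_left, real_inner_self_eq_norm_sq, hv, one_pow, mul_one]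
  have hzv : |⟪z, v⟫| ≤ ‖z‖ := by simpa [hv] using abs_real_inner_le_norm z v
  constructor
  · rw [hx, hinner]
    exact (abs_add_le _ _).trans (by linarith)
  · rw [hx, hinner, add_smul, add_sub_add_left_eq_sub]
    exact (norm_sub_inner_smul_le hv z).trans hz

theorem map_mem_tube (L : Esp n →L[ℝ] Esp n) {M : ℝ} (hL : ∀ z, ‖L z‖ ≤ M * ‖z‖) (hM : 0 ≤ M)
    (hδ : ‖L v‖ / 2 + M * δ ≤ 1 / 2) (hv : L v ≠ 0) {x : Esp n} (hx : x ∈ tube n δ a v) :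
    L x ∈ tube n (M * δ) (L a) (‖L v‖⁻¹ • L v) := by
  obtain ⟨hxv, hxperp⟩ := hx
  have hLz : ‖L ((x - a) - ⟪x - a, v⟫ • v)‖ ≤ M * δ :=
    (hL _).trans (mul_le_mul_of_nonneg_left hxperp hM)
  have hLv : ‖‖L v‖⁻¹ • L v‖ = 1 := norm_smul_inv_norm (𝕜 := ℝ) hv
  refine mem_tube_of_sub_eq (t := ⟪x - a, v⟫ * ‖L v‖) hLv ?_ hLz ?_
  · rw [smul_smul, mul_inv_cancel_right₀ (norm_ne_zero_iff.2 hv), ← map_sub, ← map_smul, ← map_add,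
      add_sub_cancel]
  · rw [abs_mul, abs_norm]
    have := mul_le_mul_of_nonneg_right hxv (norm_nonneg (L v))
    linarith

theorem volume_tube_center (δ : ℝ) (a v : Esp n) :
    volume (tube n δ a v) = volume (tube n δ 0 v) := by
  have hpre : tube n δ a v = (fun x => x + -a) ⁻¹' tube n δ 0 v := by
    ext x
    simp [tube, sub_eq_add_neg]
  rw [hpre, measure_preimage_add_right]

theorem volume_tube_radius (hδ : 0 < δ) (hv : ‖v‖ = 1) :
    volume (tube n δ 0 v) = ENNReal.ofReal (δ ^ (n - 1)) * volume (tube n 1 0 v) := by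
  have hdet : LinearMap.det (axialScale v 1 δ⁻¹ : Esp n →ₗ[ℝ] Esp n) = δ⁻¹ ^ (n - 1) := by
    rw [det_axialScale hv 1 (inv_ne_zero hδ.ne'), one_mul, finrank_euclideanSpace_fin]
  have hpre : tube n δ 0 v = axialScale v 1 δ⁻¹ ⁻¹' tube n 1 0 v := by
    ext x
    have h1 : ⟪axialScale v 1 δ⁻¹ x, v⟫ = ⟪x, v⟫ := by
      rw [real_inner_comm, inner_axialScale hv, one_mul, real_inner_comm]
    have h2 : axialScale v 1 δ⁻¹ x - ⟪x, v⟫ • v = δ⁻¹ • (x - ⟪x, v⟫ • v) := by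
      rw [axialScale_apply, real_inner_comm v x]
      module
    simp only [tube, Set.mem_preimage, Set.mem_ofPred_eq, sub_zero, h1, h2, norm_smul, norm_inv,
      Real.norm_of_nonneg hδ.le, inv_mul_le_iff₀ hδ, mul_one]
  rw [hpre, Measure.addHaar_preimage_continuousLinearMap volume (by rw [hdet]; positivity), hdet,
    inv_pow, inv_inv, abs_of_pos (by positivity)]

theorem volume_tube_direction (δ : ℝ) {v w : Esp n} (hvw : ‖v‖ = ‖w‖) :
    volume (tube n δ 0 v) = volume (tube n δ 0 w) := by
  let e : Esp n ≃ₗᵢ[ℝ] Esp n := (ℝ ∙ (v - w))ᗮ.reflection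
  have he : e v = w := Submodule.reflection_sub hvw
  have hpre : tube n δ 0 v = e ⁻¹' tube n δ 0 w := by
    ext x
    have h1 : ⟪e x, w⟫ = ⟪x, v⟫ := by rw [← he, e.inner_map_map]
    have h2 : e x - ⟪x, v⟫ • w = e (x - ⟪x, v⟫ • v) := by rw [map_sub, map_smul, he]
    simp only [tube, Set.mem_preimage, Set.mem_ofPred_eq, sub_zero, h1, h2, e.norm_map]
  rw [hpre]
  exact e.measurePreserving.measure_preimage (measurableSet_tube _ _ _).nullMeasurableSet

theorem volume_tube_eq {δ' : ℝ} (hδ : 0 < δ) (hδ' : 0 < δ') (a a' : Esp n) {v' : Esp n}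
    (hv : ‖v‖ = 1) (hv' : ‖v'‖ = 1) :
    volume (tube n δ' a' v') = ENNReal.ofReal ((δ' / δ) ^ (n - 1)) * volume (tube n δ a v) := by
  rw [volume_tube_center δ', volume_tube_center δ, volume_tube_direction δ' (hv'.trans hv.symm),
    volume_tube_radius hδ hv, volume_tube_radius hδ' hv, ← mul_assoc,
    ← ENNReal.ofReal_mul (by positivity), div_pow, div_mul_cancel₀ _ (by positivity)]

end Tubes

section CapScale

variable {n : ℕ} {β δ : ℝ} {ω v w : Esp n}

/-- The dilation that straightens the cap of radius `β` about `ω` to unit size.  The factors `5`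
leave room for images of tubes to fit into tubes of unit length and for images of
`δ`-separated directions to be `δ / (5 * β)`-separated. -/
abbrev capScale (β : ℝ) (ω : Esp n) : Esp n →L[ℝ] Esp n := axialScale ω (1 / 5) (1 / (5 * β))

/-- The direction of the image of a tube of direction `v` under `capScale β ω`. -/
def capDir (β : ℝ) (ω v : Esp n) : Esp n := ‖capScale β ω v‖⁻¹ • capScale β ω v

theorem det_capScale (hβ : β ≠ 0) (hω : ‖ω‖ = 1) :
    LinearMap.det (capScale β ω : Esp n →ₗ[ℝ] Esp n) = 1 / 5 * (1 / (5 * β)) ^ (n - 1) := by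
  rw [det_axialScale hω _ (by positivity), finrank_euclideanSpace_fin]

theorem inner_ge_of_norm_sub_lt (hω : ‖ω‖ = 1) (hv : ‖v‖ = 1) (hvω : ‖v - ω‖ < β) :
    1 - β ^ 2 / 2 ≤ ⟪ω, v⟫ := by
  have hsq : ‖v - ω‖ ^ 2 = 2 - 2 * ⟪ω, v⟫ := by
    rw [norm_sub_sq_real, hω, hv, real_inner_comm]
    ring
  linarith [pow_le_pow_left₀ (norm_nonneg _) hvω.le 2]

variable (hβ1 : β ≤ 1 / 10) (hω : ‖ω‖ = 1) (hv : ‖v‖ = 1) (hvω : ‖v - ω‖ < β)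
include hβ1 hω hv hvω

theorem inner_ge_of_mem_cap : 199 / 200 ≤ ⟪ω, v⟫ := by
  have hβ : 0 ≤ β := (norm_nonneg _).trans hvω.le
  have := inner_ge_of_norm_sub_lt hω hv hvω
  nlinarith

theorem capScale_ne_zero : capScale β ω v ≠ 0 := fun h0 => by
  have hinner := inner_axialScale hω (1 / 5) (1 / (5 * β)) v
  rw [show axialScale ω (1 / 5) (1 / (5 * β)) v = 0 from h0, inner_zero_right] at hinner
  linarith [inner_ge_of_mem_cap hβ1 hω hv hvω]

theorem norm_capScale_le : ‖capScale β ω v‖ ≤ 3 / 10 := by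
  have hβ : 0 < β := (norm_nonneg _).trans_lt hvω
  have hinner := inner_ge_of_norm_sub_lt hω hv hvω
  have hinner' : ⟪ω, v⟫ ≤ 1 := by simpa [hω, hv] using real_inner_le_norm ω v
  have hinner0 := inner_ge_of_mem_cap hβ1 hω hv hvω
  have hperp : 1 - ⟪ω, v⟫ ^ 2 ≤ β ^ 2 := by nlinarith
  have hscaled : (1 / (5 * β)) ^ 2 * (1 - ⟪ω, v⟫ ^ 2) ≤ 1 / 25 :=
    calc (1 / (5 * β)) ^ 2 * (1 - ⟪ω, v⟫ ^ 2) ≤ (1 / (5 * β)) ^ 2 * β ^ 2 := by gcongr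
      _ = 1 / 25 := by field_simp; norm_num
  refine (sq_le_sq₀ (norm_nonneg _) (by norm_num)).1 ?_
  rw [norm_axialScale_sq hω, hv]
  nlinarith

theorem norm_capDir : ‖capDir β ω v‖ = 1 :=
  norm_smul_inv_norm (𝕜 := ℝ) (capScale_ne_zero hβ1 hω hv hvω)

theorem inner_capDir_ge : 3 / 5 ≤ ⟪ω, capDir β ω v⟫ := by
  have hpos : 0 < ‖capScale β ω v‖ := norm_pos_iff.2 (capScale_ne_zero hβ1 hω hv hvω)
  rw [capDir, real_inner_smul_right, inner_axialScale hω, le_inv_mul_iff₀ hpos]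
  linarith [norm_capScale_le hβ1 hω hv hvω, inner_ge_of_mem_cap hβ1 hω hv hvω]

theorem capScale_mem_tube (hδβ : δ < β) {a x : Esp n} (hx : x ∈ tube n δ a v) :
    capScale β ω x ∈ tube n (δ / (5 * β)) (capScale β ω a) (capDir β ω v) := by
  have hβ : 0 < β := (norm_nonneg _).trans_lt hvω
  have hγ : |1 / 5| ≤ 1 / (5 * β) := by
    rw [abs_of_pos (by norm_num)]
    exact one_div_le_one_div_of_le (by positivity) (by linarith)
  have hwidth : 1 / (5 * β) * δ ≤ 1 / 5 := by
    rw [one_div_mul_eq_div, div_le_iff₀ (by positivity)]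
    linarith
  have := norm_capScale_le hβ1 hω hv hvω
  rw [← one_div_mul_eq_div]
  exact map_mem_tube (capScale β ω) (norm_axialScale_le hω hγ) (by positivity) (by linarith)
    (capScale_ne_zero hβ1 hω hv hvω) hx

theorem gnomonic_capDir :
    gnomonic ω (capDir β ω v) =
      (1 / (5 * β) / (1 / 5)) • gnomonic ω v + ((1 / 5 - 1 / (5 * β)) / (1 / 5)) • ω := by
  rw [capDir, gnomonic_smul (inv_ne_zero (norm_ne_zero_iff.2 (capScale_ne_zero hβ1 hω hv hvω))),
    gnomonic_axialScale hω (by norm_num)]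
  linarith [inner_ge_of_mem_cap hβ1 hω hv hvω]

theorem norm_sub_div_le_norm_capDir_sub (hw : ‖w‖ = 1) (hwω : ‖w - ω‖ < β) :
    ‖v - w‖ / (5 * β) ≤ ‖capDir β ω v - capDir β ω w‖ := by
  have hβ : 0 < β := (norm_nonneg _).trans_lt hvω
  have hhomothety : gnomonic ω (capDir β ω v) - gnomonic ω (capDir β ω w) =
      β⁻¹ • (gnomonic ω v - gnomonic ω w) := by
    rw [gnomonic_capDir hβ1 hω hv hvω, gnomonic_capDir hβ1 hω hw hwω, add_sub_add_right_eq_sub,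
      ← smul_sub]
    congr 1
    field_simp
  have hsource : ‖v - w‖ ≤ ‖gnomonic ω v - gnomonic ω w‖ :=
    norm_sub_le_norm_gnomonic_sub hω hv hw (by linarith [inner_ge_of_mem_cap hβ1 hω hv hvω])
      (by linarith [inner_ge_of_mem_cap hβ1 hω hw hwω])
  have htarget := norm_gnomonic_sub_le hω (norm_capDir hβ1 hω hw hwω) (by norm_num)
    (inner_capDir_ge hβ1 hω hv hvω) (inner_capDir_ge hβ1 hω hw hwω)
  rw [hhomothety, norm_smul, norm_inv, Real.norm_of_nonneg hβ.le, inv_mul_le_iff₀ hβ] at htarget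
  rw [div_le_iff₀ (by positivity)]
  nlinarith [norm_nonneg (capDir β ω v - capDir β ω w)]

end CapScale

/-! ### Narrow caps -/

section NarrowCaps

theorem norm_sub_le_angle {E : Type*} [NormedAddCommGroup E] [InnerProductSpace ℝ E] {u w : E}
    (hu : ‖u‖ = 1) (hw : ‖w‖ = 1) : ‖u - w‖ ≤ angle u w := by
  refine (sq_le_sq₀ (norm_nonneg _) (angle_nonneg _ _)).1 ?_
  have hcos : Real.cos (angle u w) = ⟪u, w⟫ := by rw [cos_angle, hu, hw, mul_one, div_one]
  rw [norm_sub_sq_real, hu, hw, ← hcos]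
  linarith [Real.one_sub_sq_div_two_le_cos (x := angle u w)]

variable {n : ℕ} {β : ℝ}

theorem exists_unit_mem_of_angleSub_lt {u : Esp n} (hu : ‖u‖ = 1) {V : Submodule ℝ (Esp n)}
    (hV : V ≠ ⊥) {r : ℝ} (h : angleSub u V < r) : ∃ w ∈ V, ‖w‖ = 1 ∧ ‖u - w‖ < r := by
  obtain ⟨w₀, hw₀, hw₀'⟩ := V.exists_mem_ne_zero_of_ne_bot hV
  have : Nonempty {w : Esp n // w ∈ V ∧ w ≠ 0} := ⟨⟨w₀, hw₀, hw₀'⟩⟩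
  obtain ⟨⟨w, hwV, hw⟩, hlt⟩ := exists_lt_of_ciInf_lt h
  have hunit : ‖‖w‖⁻¹ • w‖ = 1 := norm_smul_inv_norm (𝕜 := ℝ) hw
  refine ⟨‖w‖⁻¹ • w, V.smul_mem _ hwV, hunit, (norm_sub_le_angle hu hunit).trans_lt ?_⟩
  rwa [angle_smul_right_of_pos _ _ (by positivity)]

theorem exists_unit_mem_of_angleCap_lt {ω : Esp n} (hβ : 0 < β) (hω : ‖ω‖ = 1)
    {V : Submodule ℝ (Esp n)} (hV : V ≠ ⊥) {r : ℝ} (h : angleCap β ω V < r) :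
    ∃ w ∈ V, ‖w‖ = 1 ∧ ‖ω - w‖ < β + r := by
  have : Nonempty {u : Esp n // ‖u‖ = 1 ∧ ‖u - ω‖ < β} := ⟨⟨ω, hω, by simpa using hβ⟩⟩
  obtain ⟨⟨u, hu, huω⟩, hlt⟩ := exists_lt_of_ciInf_lt h
  obtain ⟨w, hwV, hw, huw⟩ := exists_unit_mem_of_angleSub_lt hu hV hlt
  refine ⟨w, hwV, hw, (norm_sub_le_norm_sub_add_norm_sub ω u w).trans_lt ?_⟩
  rw [norm_sub_rev ω u]
  exact add_lt_add huω huw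

/-- The centres in `W` of the caps that are narrow with respect to `V`, i.e. whose angle with `V`
does not exceed `β`. -/
def narrowCaps (β : ℝ) (W : Set (Esp n)) (V : Submodule ℝ (Esp n)) : Set (Esp n) :=
  {ω ∈ W | angleCap β ω V ≤ β}

theorem narrowCaps_subset_biUnion_closedBall {W : Set (Esp n)} (hβ : 0 < β)
    (hW : ∀ ω ∈ W, ‖ω‖ = 1) {V : Submodule ℝ (Esp n)} (hV : V ≠ ⊥) {N : Set V}
    (hN : ∀ w : V, ‖w‖ = 1 → ∃ y ∈ N, dist w y < β) :
    narrowCaps β W V ⊆ ⋃ y ∈ N, W ∩ closedBall (y : Esp n) (5 * β) := fun ω hω => by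
  obtain ⟨w, hwV, hw, hωw⟩ := exists_unit_mem_of_angleCap_lt hβ (hW ω hω.1) hV
    (hω.2.trans_lt (by linarith : β < 2 * β))
  obtain ⟨y, hy, hwy⟩ := hN ⟨w, hwV⟩ hw
  refine Set.mem_biUnion hy ⟨hω.1, mem_closedBall.2 ?_⟩
  rw [← dist_eq_norm] at hωw
  have hwy' : dist w (y : Esp n) < β := hwy
  linarith [dist_triangle ω w y]

theorem MaximalSeparated.encard_inter_closedBall_le {W : Set (Esp n)} (hW : MaximalSeparated n β W)
    (hβ : 0 < β) (c : Esp n) (M : ℝ≥0) :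
    ((W ∩ closedBall c (M * β)).encard : ℝ≥0∞) ≤ (2 * M + 1) ^ n := by
  have hsep := hW.pairwiseSeparated.comp_injective
    (Set.inclusion_injective (Set.inter_subset_left (t := closedBall c (M * β))))
  have hcard := hsep.card_le_of_dist_le hβ (c := c) (M := M) fun ω => mem_closedBall.1 ω.2.2
  rwa [ENat.card_coe_set_eq, finrank_euclideanSpace_fin] at hcard

theorem MaximalSeparated.encard_narrowCaps_le {W : Set (Esp n)} (hW : MaximalSeparated n β W)
    (hβ : 0 < β) (hβ1 : β ≤ 1) {V : Submodule ℝ (Esp n)} (hV : V ≠ ⊥) :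
    ((narrowCaps β W V).encard : ℝ≥0∞) ≤
      ENNReal.ofReal (n * 4 ^ n * 11 ^ n * β⁻¹ ^ (Module.finrank ℝ V - 1)) := by
  obtain ⟨N, hN, hNsep, hNcover⟩ := exists_separated_net {w : V | ‖w‖ = 1} hβ
  have hNcard := hNsep.card_le_of_norm_eq_one hβ hβ1 fun y => hN y.2
  rw [ENat.card_coe_set_eq] at hNcard
  have hNfin : N.Finite :=
    Set.encard_lt_top_iff.1 (ENat.toENNReal_lt_top.1 (hNcard.trans_lt ENNReal.ofReal_lt_top))
  have hsub : narrowCaps β W V ⊆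
      ⋃ y ∈ hNfin.toFinset, W ∩ closedBall (y : Esp n) ((5 : ℝ≥0) * β) := by
    simpa using narrowCaps_subset_biUnion_closedBall hβ hW.1 hV hNcover
  have hfinrank : Module.finrank ℝ V ≤ n := by simpa using V.finrank_le
  calc ((narrowCaps β W V).encard : ℝ≥0∞)
      ≤ ∑ y ∈ hNfin.toFinset, ((W ∩ closedBall (y : Esp n) ((5 : ℝ≥0) * β)).encard : ℝ≥0∞) := by
        refine (ENat.toENNReal_le.2 ((Set.encard_le_encard hsub).trans
          (Finset.set_encard_biUnion_le _ _))).trans_eq ?_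
        exact map_sum ENat.toENNRealRingHom _ _
    _ ≤ ∑ y ∈ hNfin.toFinset, 11 ^ n := Finset.sum_le_sum fun y _ =>
        (hW.encard_inter_closedBall_le hβ (y : Esp n) 5).trans_eq (by norm_num)
    _ = N.encard * 11 ^ n := by
        rw [Finset.sum_const, nsmul_eq_mul, hNfin.encard_eq_coe_toFinset_card, ENat.toENNReal_coe]
    _ ≤ ENNReal.ofReal (n * 4 ^ n * β⁻¹ ^ (Module.finrank ℝ V - 1)) * 11 ^ n := by
        gcongr
        refine hNcard.trans (ENNReal.ofReal_le_ofReal ?_)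
        gcongr
        norm_num
    _ = ENNReal.ofReal (n * 4 ^ n * 11 ^ n * β⁻¹ ^ (Module.finrank ℝ V - 1)) := by
        rw [show (11 : ℝ≥0∞) ^ n = ENNReal.ofReal (11 ^ n) by simp [ENNReal.ofReal_pow],
          ← ENNReal.ofReal_mul (by positivity)]
        ring_nf

end NarrowCaps

/-! ### The broad–narrow decomposition -/

section BroadNarrow

theorem lintegral_sum_rpow_le {α κ : Type*} [MeasurableSpace α] {μ : Measure α} {p : ℝ}
    (hp : 1 ≤ p) {f : κ → α → ℝ≥0∞} (hf : ∀ c, Measurable (f c)) (s : Finset κ) :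
    ∫⁻ x, (∑ c ∈ s, f c x) ^ p ∂μ ≤ (s.card : ℝ≥0∞) ^ (p - 1) * ∑ c ∈ s, ∫⁻ x, f c x ^ p ∂μ := by
  rw [← lintegral_finsetSum _ fun c _ => (hf c).pow_const p,
    ← lintegral_const_mul _ (Finset.measurable_fun_sum _ fun c _ => (hf c).pow_const p)]
  exact lintegral_mono fun x => ENNReal.rpow_sum_le_const_mul_sum_rpow _ _ hp

theorem card_rpow_mul_sum_le {κ : Type*} (s : Finset κ) {p : ℝ} (hp : 1 ≤ p) {f : κ → ℝ≥0∞}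
    {Q : ℝ≥0∞} (hf : ∀ c ∈ s, f c ≤ Q) :
    (s.card : ℝ≥0∞) ^ (p - 1) * ∑ c ∈ s, f c ≤ (s.card : ℝ≥0∞) ^ p * Q := by
  calc (s.card : ℝ≥0∞) ^ (p - 1) * ∑ c ∈ s, f c
      ≤ (s.card : ℝ≥0∞) ^ (p - 1) * ((s.card : ℝ≥0∞) ^ (1 : ℝ) * Q) := by
        gcongr
        rw [ENNReal.rpow_one, ← nsmul_eq_mul]
        exact Finset.sum_le_card_nsmul _ _ _ hf
    _ = (s.card : ℝ≥0∞) ^ p * Q := by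
        rw [← mul_assoc, ← ENNReal.rpow_add_of_nonneg _ _ (sub_nonneg.2 hp) zero_le_one,
          sub_add_cancel]

theorem lintegral_sum_rpow_le_filter_add {α κ : Type*} [MeasurableSpace α] {μ : Measure α} {p : ℝ}
    (hp : 1 ≤ p) {f : κ → α → ℝ≥0∞} (hf : ∀ c, Measurable (f c)) (s : Finset κ) (P : κ → Prop)
    [DecidablePred P] {M Q : ℝ≥0∞} (hM : ((s.filter P).card : ℝ≥0∞) ≤ M)
    (hQ : ∀ c ∈ s, ¬P c → ∫⁻ x, f c x ^ p ∂μ ≤ Q) :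
    ∫⁻ x, (∑ c ∈ s, f c x) ^ p ∂μ ≤
      2 ^ (p - 1) * (M ^ (p - 1) * ∑ c ∈ s, ∫⁻ x, f c x ^ p ∂μ + (s.card : ℝ≥0∞) ^ p * Q) := by
  have : 0 ≤ p := zero_le_one.trans hp
  have hp1 : 0 ≤ p - 1 := sub_nonneg.2 hp
  have hmeas : ∀ t : Finset κ, Measurable fun x => (∑ c ∈ t, f c x) ^ p := fun t =>
    (Finset.measurable_fun_sum t fun c _ => hf c).pow_const p
  calc ∫⁻ x, (∑ c ∈ s, f c x) ^ p ∂μ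
      ≤ ∫⁻ x, 2 ^ (p - 1) *
          ((∑ c ∈ s with P c, f c x) ^ p + (∑ c ∈ s with ¬P c, f c x) ^ p) ∂μ := by
        refine lintegral_mono fun x => ?_
        rw [← Finset.sum_filter_add_sum_filter_not s P]
        exact ENNReal.rpow_add_le_mul_rpow_add_rpow _ _ hp
    _ = 2 ^ (p - 1) * (∫⁻ x, (∑ c ∈ s with P c, f c x) ^ p ∂μ +
          ∫⁻ x, (∑ c ∈ s with ¬P c, f c x) ^ p ∂μ) := by
        rw [lintegral_const_mul' _ _ (ENNReal.rpow_ne_top_of_nonneg hp1 ENNReal.ofNat_ne_top),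
          lintegral_add_left (hmeas _)]
    _ ≤ _ := by
        gcongr
        · refine (lintegral_sum_rpow_le hp hf _).trans ?_
          gcongr
          exact Finset.filter_subset _ _
        · refine (lintegral_sum_rpow_le hp hf _).trans ((card_rpow_mul_sum_le _ hp
            fun c hc => hQ c (Finset.mem_filter.1 hc).1 (Finset.mem_filter.1 hc).2).trans ?_)
          gcongr
          exact Finset.filter_subset _ _

theorem exists_submodule_finrank_eq {K E : Type*} [DivisionRing K] [AddCommGroup E] [Module K E]
    {d : ℕ} (hd : d ≤ Module.finrank K E) : ∃ V : Submodule K E, Module.finrank K V = d := by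
  obtain ⟨g, hg⟩ := exists_linearIndependent_of_le_finrank hd
  exact ⟨.span K (Set.range g), by rw [finrank_span_eq_card hg, Fintype.card_fin]⟩

variable {n k A : ℕ} {p β δ : ℝ}

theorem exists_lintegral_ball_le_broadMu (hkn : k ≤ n) (p β δ : ℝ) {W : Set (Esp n)}
    (hW : W.Finite) {ι : Type} [Fintype ι] (T : ι → Set (Esp n)) (ω : ι → Esp n) (c : Esp n) :
    ∃ V : Fin A → Submodule ℝ (Esp n), (∀ a, Module.finrank ℝ (V a) = k - 1) ∧
      ∀ ω₀ ∈ W, (∀ a, β < angleCap β ω₀ (V a)) →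
        ∫⁻ x in ball c δ, overlap (fun i : {i // ω i = ω₀} => T i) x ^ p ≤
          broadMu n k A p β δ W T ω c := by
  set I : Esp n → ℝ≥0∞ := fun ω₀ =>
    ∫⁻ x in ball c δ, overlap (fun i : {i // ω i = ω₀} => T i) x ^ p
  let g : {V : Fin A → Submodule ℝ (Esp n) // ∀ a, Module.finrank ℝ (V a) = k - 1} → ℝ≥0∞ :=
    fun V => ⨆ ω₀ : {ω₀ : Esp n // ω₀ ∈ W ∧ ∀ a, β < angleCap β ω₀ (V.1 a)}, I ω₀
  have hne : (Set.range g).Nonempty := by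
    obtain ⟨V, hV⟩ := exists_submodule_finrank_eq (K := ℝ) (E := Esp n) (d := k - 1)
      (by rw [finrank_euclideanSpace_fin]; omega)
    exact ⟨_, ⟨fun _ => V, fun _ => hV⟩, rfl⟩
  -- The infimum is attained: the supremum depends on `V` only through a subset of `W`.
  have hfin : (Set.range g).Finite := by
    refine (hW.finite_subsets.image fun S : Set (Esp n) => ⨆ ω₀ : S, I ω₀).subset ?_
    rintro _ ⟨V, rfl⟩
    exact ⟨{ω₀ | ω₀ ∈ W ∧ ∀ a, β < angleCap β ω₀ (V.1 a)}, fun _ h => h.1, rfl⟩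
  obtain ⟨V, hV⟩ := hne.csInf_mem hfin
  refine ⟨V.1, V.2, fun ω₀ hω₀ hang => ?_⟩
  calc I ω₀ ≤ g V := le_iSup (fun ω₀ : {ω₀ : Esp n // ω₀ ∈ W ∧ ∀ a, β < angleCap β ω₀ (V.1 a)} =>
        I ω₀) ⟨ω₀, hω₀, hang⟩
    _ = broadMu n k A p β δ W T ω c := hV

theorem card_filter_angleCap_le (s : Finset (Esp n)) (V : Fin A → Submodule ℝ (Esp n)) {N : ℝ≥0∞}
    [DecidablePred fun ω₀ => ∃ a, angleCap β ω₀ (V a) ≤ β]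
    (hN : ∀ a, ((narrowCaps β (s : Set (Esp n)) (V a)).encard : ℝ≥0∞) ≤ N) :
    ((s.filter fun ω₀ => ∃ a, angleCap β ω₀ (V a) ≤ β).card : ℝ≥0∞) ≤ A * N := by
  have hsub : ((s.filter fun ω₀ => ∃ a, angleCap β ω₀ (V a) ≤ β : Finset (Esp n)) : Set (Esp n)) ⊆
      ⋃ a ∈ Finset.univ, narrowCaps β (s : Set (Esp n)) (V a) := fun ω₀ h => by
    obtain ⟨hs, a, ha⟩ := Finset.mem_filter.1 h
    exact Set.mem_biUnion (Finset.mem_univ a) ⟨hs, ha⟩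
  rw [← ENat.toENNReal_coe, ← Set.encard_coe_eq_coe_finsetCard]
  calc _ ≤ ((∑ a, (narrowCaps β (s : Set (Esp n)) (V a)).encard : ℕ∞) : ℝ≥0∞) :=
        ENat.toENNReal_le.2 ((Set.encard_le_encard hsub).trans (Finset.set_encard_biUnion_le _ _))
    _ = ∑ a, ((narrowCaps β (s : Set (Esp n)) (V a)).encard : ℝ≥0∞) :=
        map_sum ENat.toENNRealRingHom _ _
    _ ≤ ∑ _a : Fin A, N := Finset.sum_le_sum fun a _ => hN a
    _ = A * N := by simp

variable {ι : Type} [Fintype ι] {T : ι → Set (Esp n)} {ω : ι → Esp n} {s : Finset (Esp n)}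
  {N : ℝ≥0∞}

theorem lintegral_ball_overlap_rpow_le (hkn : k ≤ n) (hp : 1 ≤ p) (hT : ∀ i, MeasurableSet (T i))
    (hω : ∀ i, ω i ∈ s)
    (hN : ∀ V : Submodule ℝ (Esp n), Module.finrank ℝ V = k - 1 →
      ((narrowCaps β (s : Set (Esp n)) V).encard : ℝ≥0∞) ≤ N) (c : Esp n) :
    ∫⁻ x in ball c δ, overlap T x ^ p ≤
      2 ^ (p - 1) * ((A * N) ^ (p - 1) * (∑ ω₀ ∈ s,
          ∫⁻ x in ball c δ, overlap (fun i : {i // ω i = ω₀} => T i) x ^ p) +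
        (s.card : ℝ≥0∞) ^ p * broadMu n k A p β δ s T ω c) := by
  classical
  obtain ⟨V, hV, hbroad⟩ :=
    exists_lintegral_ball_le_broadMu (A := A) hkn p β δ s.finite_toSet T ω c
  simp only [overlap_eq_sum_fiber T hω]
  refine lintegral_sum_rpow_le_filter_add hp
    (fun ω₀ => measurable_overlap fun i : {i // ω i = ω₀} => hT i) s
    (fun ω₀ => ∃ a, angleCap β ω₀ (V a) ≤ β)
    (card_filter_angleCap_le s V fun a => hN _ (hV a)) fun ω₀ hω₀ h => ?_
  push Not at h
  exact hbroad ω₀ hω₀ h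

theorem broadNorm_univ_rpow (hδ : 0 < δ) (hp : p ≠ 0) (W : Set (Esp n)) (T : ι → Set (Esp n))
    (ω : ι → Esp n) (b : ℕ → Esp n) :
    broadNorm n k A p β δ W T ω b Set.univ ^ p = ∑' j, broadMu n k A p β δ W T ω (b j) := by
  rw [broadNorm, ← ENNReal.rpow_mul, one_div_mul_cancel hp, ENNReal.rpow_one]
  refine tsum_congr fun j => ?_
  rw [Set.inter_univ, ENNReal.div_self (measure_ball_pos _ _ hδ).ne' measure_ball_lt_top.ne,
    one_mul]

theorem lintegral_overlap_rpow_le (hkn : k ≤ n) (hp : 1 ≤ p) (hδ : 0 < δ)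
    (hT : ∀ i, MeasurableSet (T i)) (hω : ∀ i, ω i ∈ s)
    (hN : ∀ V : Submodule ℝ (Esp n), Module.finrank ℝ V = k - 1 →
      ((narrowCaps β (s : Set (Esp n)) V).encard : ℝ≥0∞) ≤ N)
    {b : ℕ → Esp n} (hb : FinOverlapCover n δ b) :
    ∫⁻ x, overlap T x ^ p ≤
      2 ^ (p - 1) * ((A * N) ^ (p - 1) * (5 ^ n * ∑ ω₀ ∈ s,
          ∫⁻ x, overlap (fun i : {i // ω i = ω₀} => T i) x ^ p) +
        (s.card : ℝ≥0∞) ^ p * broadNorm n k A p β δ s T ω b Set.univ ^ p) := by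
  calc ∫⁻ x, overlap T x ^ p
      ≤ ∑' j, ∫⁻ x in ball (b j) δ, overlap T x ^ p := hb.lintegral_le_tsum_lintegral_ball _
    _ ≤ ∑' j, 2 ^ (p - 1) * ((A * N) ^ (p - 1) * (∑ ω₀ ∈ s,
          ∫⁻ x in ball (b j) δ, overlap (fun i : {i // ω i = ω₀} => T i) x ^ p) +
        (s.card : ℝ≥0∞) ^ p * broadMu n k A p β δ s T ω (b j)) :=
        ENNReal.tsum_le_tsum fun j => lintegral_ball_overlap_rpow_le hkn hp hT hω hN (b j)
    _ = 2 ^ (p - 1) * ((A * N) ^ (p - 1) * (∑ ω₀ ∈ s, ∑' j,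
          ∫⁻ x in ball (b j) δ, overlap (fun i : {i // ω i = ω₀} => T i) x ^ p) +
        (s.card : ℝ≥0∞) ^ p * broadNorm n k A p β δ s T ω b Set.univ ^ p) := by
        rw [broadNorm_univ_rpow hδ (zero_lt_one.trans_le hp).ne', ENNReal.tsum_mul_left,
          ENNReal.tsum_add, ENNReal.tsum_mul_left, ENNReal.tsum_mul_left,
          Summable.tsum_finsetSum fun _ _ => ENNReal.summable]
    _ ≤ _ := by
        rw [Finset.mul_sum s _ (5 ^ n)]
        gcongr
        exact hb.tsum_lintegral_ball_le
          ((measurable_overlap fun i : {i // ω i = ω₀} => hT i).pow_const p)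

end BroadNarrow

section TubeBounds

/-- A family of unit vectors at mutual distance at least `δ`: the directions of a
direction-separated family of `δ`-tubes. -/
structure DirectionSeparated {ι : Type*} {n : ℕ} (δ : ℝ) (v : ι → Esp n) : Prop where
  norm_eq_one : ∀ i, ‖v i‖ = 1
  le_norm_sub : ∀ i j, i ≠ j → δ ≤ ‖v i - v j‖

/-- The linear estimate `‖∑ χ_T‖_p ^ p ≤ B * ∑ |T|` for all finite direction-separated families
of `δ`-tubes in `ℝⁿ`. -/
def TubeBound (n : ℕ) (p δ : ℝ) (B : ℝ≥0∞) : Prop :=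
  ∀ (m : ℕ) (a v : Fin m → Esp n), DirectionSeparated δ v →
    ∫⁻ x, overlap (fun i => tube n δ (a i) (v i)) x ^ p ≤ B * ∑ i, volume (tube n δ (a i) (v i))

/-- The `k`-broad estimate `‖∑ χ_T‖_{BL^p_{k,A}} ≤ D * (∑ |T|) ^ (1 / p)` for all finite
direction-separated families of `δ`-tubes in `ℝⁿ` and all choices of caps of radius `β`. -/
def BroadTubeBound (n k A : ℕ) (p β δ : ℝ) (D : ℝ≥0∞) : Prop :=
  ∀ (m : ℕ) (a v : Fin m → Esp n), DirectionSeparated δ v →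
    ∀ W : Set (Esp n), MaximalSeparated n β W →
    ∀ ω : Fin m → Esp n, (∀ i, ω i ∈ W ∧ ‖v i - ω i‖ < β) →
    ∀ b : ℕ → Esp n, FinOverlapCover n δ b →
      broadNorm n k A p β δ W (fun i => tube n δ (a i) (v i)) ω b Set.univ ≤
        D * (∑ i, volume (tube n δ (a i) (v i))) ^ (1 / p)

namespace DirectionSeparated

variable {ι κ : Type*} {n : ℕ} {β δ : ℝ} {v : ι → Esp n}

theorem pairwiseSeparated (hv : DirectionSeparated δ v) : PairwiseSeparated δ v := fun i j hij =>
  (hv.le_norm_sub i j hij).trans_eq (dist_eq_norm _ _).symm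

theorem comp_injective (hv : DirectionSeparated δ v) {f : κ → ι} (hf : f.Injective) :
    DirectionSeparated δ (v ∘ f) :=
  ⟨fun _ => hv.norm_eq_one _, fun _ _ hij => hv.le_norm_sub _ _ (hf.ne hij)⟩

theorem capDir (hv : DirectionSeparated δ v) (hβ : 0 < β) (hβ1 : β ≤ 1 / 10) {ω : Esp n}
    (hω : ‖ω‖ = 1) (hvω : ∀ i, ‖v i - ω‖ < β) :
    DirectionSeparated (δ / (5 * β)) fun i => capDir β ω (v i) where
  norm_eq_one i := norm_capDir hβ1 hω (hv.norm_eq_one i) (hvω i)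
  le_norm_sub i j hij := by
    refine le_trans ?_ (norm_sub_div_le_norm_capDir_sub hβ1 hω (hv.norm_eq_one i) (hvω i)
      (hv.norm_eq_one j) (hvω j))
    gcongr
    exact hv.le_norm_sub i j hij

end DirectionSeparated

variable {n : ℕ} {p β δ : ℝ} {B : ℝ≥0∞}

theorem lintegral_comp_capScale (hβ : 0 < β) {ω : Esp n} (hω : ‖ω‖ = 1) {g : Esp n → ℝ≥0∞}
    (hg : Measurable g) :
    ∫⁻ x, g (capScale β ω x) = ENNReal.ofReal (5 * (5 * β) ^ (n - 1)) * ∫⁻ y, g y := by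
  have hdet := det_capScale hβ.ne' hω
  have hmap : Measure.map (capScale β ω) volume =
      ENNReal.ofReal |(1 / 5 * (1 / (5 * β)) ^ (n - 1))⁻¹| • (volume : Measure (Esp n)) := by
    rw [← hdet]
    exact Measure.map_linearMap_addHaar_eq_smul_addHaar _ (by rw [hdet]; positivity)
  rw [← lintegral_map hg (capScale β ω).continuous.measurable, hmap, lintegral_smul_measure,
    smul_eq_mul, abs_of_pos (by positivity), mul_inv, ← inv_pow, one_div, one_div, inv_inv, inv_inv]

theorem sum_volume_tube_capDir {ι : Type*} [Fintype ι] {v : ι → Esp n}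
    (hv : DirectionSeparated δ v) (hδ : 0 < δ) (hβ : 0 < β) (hβ1 : β ≤ 1 / 10) {ω : Esp n}
    (hω : ‖ω‖ = 1) (hvω : ∀ i, ‖v i - ω‖ < β) (a a' : ι → Esp n) :
    ∑ i, volume (tube n (δ / (5 * β)) (a' i) (capDir β ω (v i))) =
      ENNReal.ofReal ((1 / (5 * β)) ^ (n - 1)) * ∑ i, volume (tube n δ (a i) (v i)) := by
  rw [Finset.mul_sum]
  refine Finset.sum_congr rfl fun i _ => ?_
  rw [volume_tube_eq hδ (by positivity) (a i) (a' i) (hv.norm_eq_one i)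
    ((hv.capDir hβ hβ1 hω hvω).norm_eq_one i), div_div, mul_comm (5 * β), ← div_div,
    div_self hδ.ne']

namespace TubeBound

theorem mono {B' : ℝ≥0∞} (h : TubeBound n p δ B) (hB : B ≤ B') : TubeBound n p δ B' :=
  fun m a v hv => (h m a v hv).trans (by gcongr)

theorem lintegral_le {ι : Type*} [Fintype ι] (h : TubeBound n p δ B) (a : ι → Esp n)
    {v : ι → Esp n} (hv : DirectionSeparated δ v) :
    ∫⁻ x, overlap (fun i => tube n δ (a i) (v i)) x ^ p ≤
      B * ∑ i, volume (tube n δ (a i) (v i)) := by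
  let e := (Fintype.equivFin ι).symm
  calc ∫⁻ x, overlap (fun i => tube n δ (a i) (v i)) x ^ p
      = ∫⁻ x, overlap ((fun i => tube n δ (a i) (v i)) ∘ e) x ^ p := by
        simp only [overlap_comp_equiv]
    _ ≤ B * ∑ j, volume (tube n δ (a (e j)) (v (e j))) :=
        h _ (a ∘ e) (v ∘ e) (hv.comp_injective e.injective)
    _ = B * ∑ i, volume (tube n δ (a i) (v i)) := by
        rw [e.sum_comp fun i => volume (tube n δ (a i) (v i))]

theorem lintegral_le_of_mem_cap {ι : Type*} [Fintype ι] (h : TubeBound n p (δ / (5 * β)) B)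
    (hp : 0 ≤ p) (hδ : 0 < δ) (hδβ : δ < β) (hβ1 : β ≤ 1 / 10) (a : ι → Esp n) {v : ι → Esp n}
    (hv : DirectionSeparated δ v) {ω : Esp n} (hω : ‖ω‖ = 1) (hvω : ∀ i, ‖v i - ω‖ < β) :
    ∫⁻ x, overlap (fun i => tube n δ (a i) (v i)) x ^ p ≤
      5 * B * ∑ i, volume (tube n δ (a i) (v i)) := by
  have hβ : 0 < β := hδ.trans hδβ
  set T' : ι → Set (Esp n) := fun i =>
    tube n (δ / (5 * β)) (capScale β ω (a i)) (capDir β ω (v i))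
  calc ∫⁻ x, overlap (fun i => tube n δ (a i) (v i)) x ^ p
      ≤ ∫⁻ x, overlap T' (capScale β ω x) ^ p := lintegral_mono fun x =>
        ENNReal.rpow_le_rpow (overlap_le_overlap fun i hx =>
          capScale_mem_tube hβ1 hω (hv.norm_eq_one i) (hvω i) hδβ hx) hp
    _ = ENNReal.ofReal (5 * (5 * β) ^ (n - 1)) * ∫⁻ y, overlap T' y ^ p :=
        lintegral_comp_capScale hβ hω
          ((measurable_overlap fun i => measurableSet_tube _ _ _).pow_const p)
    _ ≤ ENNReal.ofReal (5 * (5 * β) ^ (n - 1)) * (B * ∑ i, volume (T' i)) := by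
        gcongr
        exact h.lintegral_le _ (hv.capDir hβ hβ1 hω hvω)
    _ = ENNReal.ofReal (5 * (5 * β) ^ (n - 1)) * ENNReal.ofReal ((1 / (5 * β)) ^ (n - 1)) * B *
          ∑ i, volume (tube n δ (a i) (v i)) := by
        rw [sum_volume_tube_capDir hv hδ hβ hβ1 hω hvω a]
        ring
    _ = 5 * B * ∑ i, volume (tube n δ (a i) (v i)) := by
        rw [← ENNReal.ofReal_mul (by positivity), mul_assoc (5 : ℝ), ← mul_pow,
          mul_one_div_cancel (by positivity), one_pow, mul_one, ENNReal.ofReal_ofNat]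

theorem of_le (hp : 1 ≤ p) (hβ : 0 < β) (hβδ : β ≤ δ) :
    TubeBound n p δ (ENNReal.ofReal ((2 * β⁻¹ + 1) ^ n) ^ (p - 1)) := by
  intro m a v hv
  have hcard : (m : ℝ≥0∞) ≤ ENNReal.ofReal ((2 * β⁻¹ + 1) ^ n) := by
    simpa using (hv.pairwiseSeparated.mono hβδ).card_le_of_norm_le_one hβ
      fun i => (hv.norm_eq_one i).le
  have hT : ∀ i, MeasurableSet (tube n δ (a i) (v i)) := fun i => measurableSet_tube _ _ _
  calc ∫⁻ x, overlap (fun i => tube n δ (a i) (v i)) x ^ p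
      ≤ ∫⁻ x, (m : ℝ≥0∞) ^ (p - 1) * overlap (fun i => tube n δ (a i) (v i)) x :=
        lintegral_mono fun x => by
          simpa using overlap_rpow_le_card_rpow_mul (fun i => tube n δ (a i) (v i)) hp x
    _ = (m : ℝ≥0∞) ^ (p - 1) * ∑ i, volume (tube n δ (a i) (v i)) := by
        rw [lintegral_const_mul _ (measurable_overlap hT), lintegral_overlap hT, tsum_fintype]
    _ ≤ _ := by
        have : 0 ≤ p - 1 := sub_nonneg.2 hp
        gcongr

theorem eLpNorm_le {C γ : ℝ} (h : TubeBound n p δ (ENNReal.ofReal (C * δ ^ (p * γ)))) (hp : 0 < p)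
    (hδ : 0 < δ) (hC : 0 ≤ C) {m : ℕ} (a : Fin m → Esp n) {v : Fin m → Esp n}
    (hv : DirectionSeparated δ v) :
    eLpNorm (fun x => ∑ i, (tube n δ (a i) (v i)).indicator (fun _ => (1 : ℝ)) x)
        (ENNReal.ofReal p) volume ≤
      ENNReal.ofReal (C ^ (1 / p) * δ ^ γ) * (∑ i, volume (tube n δ (a i) (v i))) ^ (1 / p) := by
  rw [eLpNorm_sum_indicator _ hp]
  refine (ENNReal.rpow_le_rpow (h m a v hv) (by positivity)).trans_eq ?_
  rw [ENNReal.mul_rpow_of_nonneg _ _ (by positivity),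
    ENNReal.ofReal_rpow_of_nonneg (by positivity) (by positivity),
    Real.mul_rpow hC (by positivity), ← Real.rpow_mul hδ.le, mul_right_comm,
    mul_one_div_cancel hp.ne', one_mul]

end TubeBound

end TubeBounds

/-! ### Induction on scales -/

section InductionOnScales

variable {n k A : ℕ} {p β δ : ℝ} {B D : ℝ≥0∞}

/-- The factor lost on the narrow part in one step of the induction on scales. There are at most
`A * (n * 4 ^ n * 11 ^ n * β⁻¹ ^ (k - 2))` narrow caps, balls of the cover overlap at most `5 ^ n`
times, and rescaling a cap costs a factor `5`. -/
def narrowConst (n k A : ℕ) (p β : ℝ) : ℝ :=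
  2 ^ (p - 1) * ((A * (n * 4 ^ n * 11 ^ n * β⁻¹ ^ (k - 2))) ^ (p - 1) * (5 ^ n * 5))

/-- The factor lost on the broad part in one step of the induction on scales: the number of all
caps, to the power `p`, up to the constant from splitting the sum. -/
def broadConst (n : ℕ) (p β : ℝ) : ℝ := 2 ^ (p - 1) * ((2 * β⁻¹ + 1) ^ n) ^ p

theorem narrowConst_nonneg (n k A : ℕ) (p : ℝ) (hβ : 0 < β) : 0 ≤ narrowConst n k A p β := by
  rw [narrowConst]
  positivity

theorem broadConst_pos (n : ℕ) (p : ℝ) (hβ : 0 < β) : 0 < broadConst n p β := by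
  rw [broadConst]
  positivity

theorem ofReal_narrowConst (n k A : ℕ) (hp : 1 ≤ p) (hβ : 0 < β) :
    ENNReal.ofReal (narrowConst n k A p β) =
      2 ^ (p - 1) * ((A * ENNReal.ofReal (n * 4 ^ n * 11 ^ n * β⁻¹ ^ (k - 2))) ^ (p - 1) *
        (5 ^ n * 5)) := by
  have hp1 : 0 ≤ p - 1 := sub_nonneg.2 hp
  have hN : 0 ≤ n * 4 ^ n * 11 ^ n * β⁻¹ ^ (k - 2) := by positivity
  rw [narrowConst]
  generalize n * 4 ^ n * 11 ^ n * β⁻¹ ^ (k - 2) = N at hN ⊢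
  rw [ENNReal.ofReal_mul (by positivity), ENNReal.ofReal_mul (by positivity),
    ← ENNReal.ofReal_rpow_of_nonneg zero_le_two hp1,
    ← ENNReal.ofReal_rpow_of_nonneg (by positivity) hp1, ENNReal.ofReal_mul (Nat.cast_nonneg A),
    ENNReal.ofReal_natCast, ENNReal.ofReal_mul (by positivity), ENNReal.ofReal_pow (by norm_num)]
  simp only [ENNReal.ofReal_ofNat]

theorem ofReal_broadConst (n : ℕ) (hp : 1 ≤ p) (hβ : 0 < β) :
    ENNReal.ofReal (broadConst n p β) =
      2 ^ (p - 1) * ENNReal.ofReal ((2 * β⁻¹ + 1) ^ n) ^ p := by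
  rw [broadConst, ENNReal.ofReal_mul (by positivity),
    ← ENNReal.ofReal_rpow_of_nonneg zero_le_two (sub_nonneg.2 hp),
    ← ENNReal.ofReal_rpow_of_nonneg (by positivity) (zero_le_one.trans hp), ENNReal.ofReal_ofNat]

theorem TubeBound.sum_lintegral_fiber_le (h : TubeBound n p (δ / (5 * β)) B) (hp : 0 ≤ p)
    (hδ : 0 < δ) (hδβ : δ < β) (hβ1 : β ≤ 1 / 10) {ι : Type*} [Fintype ι] (a : ι → Esp n)
    {v ω : ι → Esp n} (hv : DirectionSeparated δ v) {s : Finset (Esp n)}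
    (hs : ∀ ω₀ ∈ s, ‖ω₀‖ = 1) (hω : ∀ i, ω i ∈ s ∧ ‖v i - ω i‖ < β) :
    ∑ ω₀ ∈ s, ∫⁻ x, overlap (fun i : {i // ω i = ω₀} => tube n δ (a i) (v i)) x ^ p ≤
      5 * B * ∑ i, volume (tube n δ (a i) (v i)) := by
  classical
  rw [← tsum_fintype (fun i => volume (tube n δ (a i) (v i))) (L := .unconditional ι),
    tsum_eq_sum_tsum_fiber _ fun i => (hω i).1, Finset.mul_sum]
  refine Finset.sum_le_sum fun ω₀ hω₀ => ?_
  rw [tsum_fintype]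
  exact h.lintegral_le_of_mem_cap hp hδ hδβ hβ1 (fun i : {i // ω i = ω₀} => a i)
    (hv.comp_injective Subtype.val_injective) (hs ω₀ hω₀) fun i => by simpa [i.2] using (hω i).2

theorem BroadTubeBound.tubeBound (h : BroadTubeBound n k A p β δ D) (hk2 : 2 ≤ k) (hkn : k ≤ n)
    (hp : 1 ≤ p) (hδ : 0 < δ) (hδβ : δ < β) (hβ1 : β ≤ 1 / 10)
    (hB : TubeBound n p (δ / (5 * β)) B) :
    TubeBound n p δ (ENNReal.ofReal (narrowConst n k A p β) * B +
      ENNReal.ofReal (broadConst n p β) * D ^ p) := by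
  intro m a v hv
  have hp0 : 0 < p := zero_lt_one.trans_le hp
  have hβ : 0 < β := hδ.trans hδβ
  obtain ⟨W, hW⟩ := exists_maximalSeparated n hβ
  obtain ⟨b, hb⟩ := exists_finOverlapCover (by omega : 0 < n) hδ
  obtain ⟨s, rfl⟩ := (hW.finite hβ).exists_finset_coe
  choose ω hω using fun i => hW.2.2 (v i) (hv.norm_eq_one i)
  have hcaps : (s.card : ℝ≥0∞) ≤ ENNReal.ofReal ((2 * β⁻¹ + 1) ^ n) := by
    simpa [Set.encard_coe_eq_coe_finsetCard] using hW.encard_le hβ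
  have hnarrowCaps : ∀ V : Submodule ℝ (Esp n), Module.finrank ℝ V = k - 1 →
      ((narrowCaps β (s : Set (Esp n)) V).encard : ℝ≥0∞) ≤
        ENNReal.ofReal (n * 4 ^ n * 11 ^ n * β⁻¹ ^ (k - 2)) := fun V hV => by
    have hV0 : V ≠ ⊥ := fun h0 => by rw [h0, finrank_bot] at hV; omega
    have := hW.encard_narrowCaps_le hβ (by linarith) hV0
    rwa [hV, Nat.sub_sub] at this
  set S := ∑ i, volume (tube n δ (a i) (v i))
  have hbroad : broadNorm n k A p β δ s (fun i => tube n δ (a i) (v i)) ω b Set.univ ^ p ≤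
      D ^ p * S := by
    refine (ENNReal.rpow_le_rpow (h m a v hv s hW ω hω b hb) hp0.le).trans_eq ?_
    rw [ENNReal.mul_rpow_of_nonneg _ _ hp0.le, ← ENNReal.rpow_mul, one_div_mul_cancel hp0.ne',
      ENNReal.rpow_one]
  calc ∫⁻ x, overlap (fun i => tube n δ (a i) (v i)) x ^ p
      ≤ 2 ^ (p - 1) *
          ((A * ENNReal.ofReal (n * 4 ^ n * 11 ^ n * β⁻¹ ^ (k - 2))) ^ (p - 1) *
            (5 ^ n * (5 * B * S)) + ENNReal.ofReal ((2 * β⁻¹ + 1) ^ n) ^ p * (D ^ p * S)) := by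
        refine (lintegral_overlap_rpow_le (A := A) hkn hp hδ (fun i => measurableSet_tube _ _ _)
          (fun i => (hω i).1) hnarrowCaps hb).trans ?_
        gcongr
        exact hB.sum_lintegral_fiber_le hp0.le hδ hδβ hβ1 a hv hW.1 hω
    _ = (ENNReal.ofReal (narrowConst n k A p β) * B +
          ENNReal.ofReal (broadConst n p β) * D ^ p) * S := by
        rw [ofReal_narrowConst n k A hp hβ, ofReal_broadConst n hp hβ]
        ring

theorem induction_on_scales {Q : ℝ → ℝ → Prop}
    (hmono : ∀ δ B B', B ≤ B' → Q δ B → Q δ B') {β ρ L F M γ : ℝ} (hβ : 0 < β) (hβρ : β ≤ ρ)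
    (hρ : ρ < 1) (hF : 0 ≤ F) (hM : 0 ≤ M) (hγ : γ ≤ 0) (hL : L * ρ ^ (-γ) ≤ 1 / 2)
    (hcoarse : ∀ δ, β ≤ δ → Q δ M)
    (hstep : ∀ δ B, 0 < δ → δ < β → 0 ≤ B → Q (δ / ρ) B → Q δ (L * B + F * δ ^ γ)) :
    ∀ δ, 0 < δ → δ < 1 → Q δ ((2 * F + M) * δ ^ γ) := by
  have hρ0 : 0 < ρ := hβ.trans_le hβρ
  have key : ∀ (N : ℕ) (δ : ℝ), ρ ^ N ≤ δ → 0 < δ → δ < 1 → Q δ ((2 * F + M) * δ ^ γ) := by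
    intro N
    induction N with
    | zero => exact fun δ h _ h1 => absurd (pow_zero ρ ▸ h) h1.not_ge
    | succ N ih =>
      intro δ hN hδ hδ1
      rcases le_or_gt β δ with hβδ | hδβ
      · have hone : 1 ≤ δ ^ γ := Real.one_le_rpow_of_pos_of_le_one_of_nonpos hδ hδ1.le hγ
        exact hmono _ _ _ (by nlinarith) (hcoarse δ hβδ)
      · have hcoarser : Q (δ / ρ) ((2 * F + M) * (δ / ρ) ^ γ) :=
          ih _ ((le_div_iff₀ hρ0).2 ((pow_succ ρ N).symm.trans_le hN)) (by positivity)
            ((div_lt_one hρ0).2 (hδβ.trans_le hβρ))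
        refine hmono _ _ _ ?_ (hstep δ _ hδ hδβ (by positivity) hcoarser)
        calc L * ((2 * F + M) * (δ / ρ) ^ γ) + F * δ ^ γ
            = (L * ρ ^ (-γ)) * ((2 * F + M) * δ ^ γ) + F * δ ^ γ := by
              rw [Real.div_rpow hδ.le hρ0.le, Real.rpow_neg hρ0.le]
              ring
          _ ≤ 1 / 2 * ((2 * F + M) * δ ^ γ) + F * δ ^ γ := by gcongr
          _ ≤ (2 * F + M) * δ ^ γ := by
              linarith [mul_nonneg hM (Real.rpow_nonneg hδ.le γ)]
  intro δ hδ hδ1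
  obtain ⟨N, hN⟩ := exists_pow_lt_of_lt_one hδ hρ
  exact key N δ hN.le hδ hδ1

theorem exists_pos_le_mul_rpow_le (C : ℝ) {s r η : ℝ} (hs : 0 < s) (hr : 0 < r) (hη : 0 < η) :
    ∃ β, 0 < β ∧ β ≤ r ∧ C * β ^ s ≤ η := by
  have htendsto : Filter.Tendsto (fun β : ℝ => C * β ^ s) (nhdsWithin 0 (Set.Ioi 0)) (nhds 0) := by
    have := ((Real.continuousAt_rpow_const 0 s (.inr hs.le)).tendsto.const_mul C)
    rw [Real.zero_rpow hs.ne', mul_zero] at this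
    exact this.mono_left nhdsWithin_le_nhds
  obtain ⟨β, hβη, hβ⟩ := ((htendsto.eventually (ge_mem_nhds hη)).and
    (Ioc_mem_nhdsGT hr)).exists
  exact ⟨β, hβ.1, hβ.2, hβη⟩

theorem narrowConst_mul_rpow (n A : ℕ) (hk2 : 2 ≤ k) (hβ : 0 < β) (γ : ℝ) :
    narrowConst n k A p β * (5 * β) ^ (-γ) =
      narrowConst n k A p 1 * 5 ^ (-γ) * β ^ (-γ - (k - 2) * (p - 1)) := by
  have hpow : (β⁻¹ ^ (k - 2)) ^ (p - 1) = β ^ (-((k - 2) * (p - 1) : ℝ)) := by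
    rw [← Real.rpow_natCast, ← Real.rpow_mul (by positivity), Nat.cast_sub hk2,
      Real.inv_rpow hβ.le, Real.rpow_neg hβ.le, Nat.cast_ofNat]
  rw [narrowConst, narrowConst, ← mul_assoc (A : ℝ), Real.mul_rpow (by positivity) (by positivity),
    hpow, Real.mul_rpow (by norm_num) hβ.le, sub_eq_add_neg (-γ), Real.rpow_add hβ, inv_one,
    one_pow, mul_one]
  ring

theorem exists_tubeBound (hk2 : 2 ≤ k) (hkn : k ≤ n) (hp : 1 ≤ p) {γ : ℝ}
    (hγ : p * γ < -((k - 2) * (p - 1)))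
    (hbroad : ∀ β : ℝ, 0 < β → β < 1 → ∃ C : ℝ, 0 < C ∧ ∀ δ : ℝ, 0 < δ → δ < β →
      BroadTubeBound n k A p β δ (ENNReal.ofReal (C * δ ^ γ))) :
    ∃ K : ℝ, 0 < K ∧ ∀ δ : ℝ, 0 < δ → δ < 1 →
      TubeBound n p δ (ENNReal.ofReal (K * δ ^ (p * γ))) := by
  have hp0 : 0 ≤ p := zero_le_one.trans hp
  obtain ⟨β, hβ, hβ1, hβnarrow⟩ := exists_pos_le_mul_rpow_le
    (narrowConst n k A p 1 * 5 ^ (-(p * γ))) (s := -(p * γ) - (k - 2) * (p - 1)) (r := 1 / 10)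
    (η := 1 / 2) (by linarith) (by norm_num) (by norm_num)
  rw [← narrowConst_mul_rpow n A hk2 hβ] at hβnarrow
  obtain ⟨C, hC, hbroad⟩ := hbroad β hβ (by linarith)
  have hγ0 : p * γ ≤ 0 := by
    have : (2 : ℝ) ≤ k := by exact_mod_cast hk2
    nlinarith
  have hF : 0 < broadConst n p β * C ^ p := mul_pos (broadConst_pos n p hβ) (by positivity)
  refine ⟨2 * (broadConst n p β * C ^ p) + ((2 * β⁻¹ + 1) ^ n) ^ (p - 1), by positivity,
    induction_on_scales (Q := fun δ B => TubeBound n p δ (ENNReal.ofReal B))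
      (fun _ _ _ hB h => h.mono (ENNReal.ofReal_le_ofReal hB)) hβ (by linarith : β ≤ 5 * β)
      (by linarith) hF.le (by positivity) hγ0 hβnarrow (fun δ hβδ => ?_)
      fun δ B hδ hδβ hB h => ?_⟩
  · rw [← ENNReal.ofReal_rpow_of_nonneg (by positivity) (sub_nonneg.2 hp)]
    exact .of_le hp hβ hβδ
  · have hstep := (hbroad δ hδ hδβ).tubeBound hk2 hkn hp hδ hδβ hβ1 h
    rwa [ENNReal.ofReal_rpow_of_nonneg (by positivity) hp0, Real.mul_rpow hC.le (by positivity),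
      ← Real.rpow_mul hδ.le, mul_comm γ, ← ENNReal.ofReal_mul (narrowConst_nonneg n k A p hβ),
      ← ENNReal.ofReal_mul (broadConst_pos n p hβ).le, ← mul_assoc,
      ← ENNReal.ofReal_add (mul_nonneg (narrowConst_nonneg n k A p hβ) hB) (by positivity)] at hstep

end InductionOnScales

section LossExponent

variable {n k p ε : ℝ}

theorem one_le_of_criticalExponent_le (hkn : k ≤ n) (hp : (n - k + 2) / (n - k + 1) ≤ p) :
    1 ≤ p :=
  ((one_le_div (by linarith)).2 (by linarith)).trans hp

theorem mul_lossExponent_lt (hkn : k ≤ n) (hε : 0 < ε)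
    (hp : (n - k + 2) / (n - k + 1) ≤ p) :
    p * (-(n - 1 - n / p) - ε) < -((k - 2) * (p - 1)) := by
  have hp0 : 0 < p := zero_lt_one.trans_le (one_le_of_criticalExponent_le hkn hp)
  have hcritical : n - k + 2 ≤ p * (n - k + 1) := (div_le_iff₀ (by linarith)).1 hp
  have hexpand : p * (-(n - 1 - n / p) - ε) = n - p * (n - 1) - p * ε := by
    field_simp
    ring
  linarith [mul_pos hp0 hε]

end LossExponent

theorem statement4_general {n k : ℕ} (hk2 : 2 ≤ k) (hkn : k ≤ n) {p γ : ℝ} (hp : 1 ≤ p)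
    (hγ : p * γ < -((k - 2) * (p - 1))) (A : ℕ)
    (hbroad : ∀ β : ℝ, 0 < β → β < 1 →
      ∃ Cβ : ℝ, 0 < Cβ ∧
        ∀ (δ : ℝ), 0 < δ → δ < β →
        ∀ (m : ℕ) (a v : Fin m → Esp n),
          (∀ i, ‖v i‖ = 1) →
          (∀ i j, i ≠ j → δ ≤ ‖v i - v j‖) →
        ∀ (W : Set (Esp n)), MaximalSeparated n β W →
        ∀ (ω : Fin m → Esp n), (∀ i, ω i ∈ W ∧ ‖v i - ω i‖ < β) →
        ∀ (b : ℕ → Esp n), FinOverlapCover n δ b →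
          broadNorm n k A p β δ W (fun i => tube n δ (a i) (v i)) ω b Set.univ ≤
            ENNReal.ofReal (Cβ * δ ^ γ) * (∑ i, volume (tube n δ (a i) (v i))) ^ (1 / p)) :
    ∃ C : ℝ, 0 < C ∧
      ∀ (δ : ℝ), 0 < δ → δ < 1 →
      ∀ (m : ℕ) (a v : Fin m → Esp n),
        (∀ i, ‖v i‖ = 1) →
        (∀ i j, i ≠ j → δ ≤ ‖v i - v j‖) →
        eLpNorm (fun x => ∑ i, Set.indicator (tube n δ (a i) (v i)) (fun _ => (1 : ℝ)) x)
            (ENNReal.ofReal p) volume ≤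
          ENNReal.ofReal (C * δ ^ γ) * (∑ i, volume (tube n δ (a i) (v i))) ^ (1 / p) := by
  have hbroadTube : ∀ β : ℝ, 0 < β → β < 1 → ∃ C : ℝ, 0 < C ∧ ∀ δ : ℝ, 0 < δ → δ < β →
      BroadTubeBound n k A p β δ (ENNReal.ofReal (C * δ ^ γ)) := fun β hβ hβ1 => by
    obtain ⟨C, hC, h⟩ := hbroad β hβ hβ1
    exact ⟨C, hC, fun δ hδ hδβ m a v hv => h δ hδ hδβ m a v hv.norm_eq_one hv.le_norm_sub⟩
  obtain ⟨K, hK, htube⟩ := exists_tubeBound hk2 hkn hp hγ hbroadTube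
  exact ⟨K ^ (1 / p), Real.rpow_pos_of_pos hK _, fun δ hδ hδ1 m a v hv hsep =>
    (htube δ hδ hδ1).eLpNorm_le (zero_lt_one.trans_le hp) hδ hK.le a ⟨hv, hsep⟩⟩

/-- Proposition 2.1 (passing from k-broad to linear estimates): let `2 ≤ k ≤ n`,
`p ≥ (n−k+2)/(n−k+1)`, `ε > 0` and `A ∈ ℕ`.  If for every `β ∈ (0,1)` there is `C_β > 0`
such that the k-broad estimate `‖Σ_T χ_T‖_{BL^p_{k,A}(ℝⁿ)} ≤ C_β δ^{−(n−1−n/p)−ε}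
(Σ_T |T|)^{1/p}` holds for every `0 < δ < β`, every direction-separated family of δ-tubes,
every cap partition and every finitely-overlapping cover by δ-balls, then there is `C > 0`
such that `‖Σ_T χ_T‖_{L^p(ℝⁿ)} ≤ C δ^{−(n−1−n/p)−ε} (Σ_T |T|)^{1/p}` for every
`0 < δ < 1` and every direction-separated family of δ-tubes. -/
theorem statement4 (n k : ℕ) (hn : 2 ≤ n) (hk2 : 2 ≤ k) (hkn : k ≤ n) (p : ℝ)
    (hp : ((n : ℝ) - (k : ℝ) + 2) / ((n : ℝ) - (k : ℝ) + 1) ≤ p)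
    (ε : ℝ) (hε : 0 < ε) (A : ℕ)
    (hbroad : ∀ β : ℝ, 0 < β → β < 1 →
      ∃ Cβ : ℝ, 0 < Cβ ∧
        ∀ (δ : ℝ), 0 < δ → δ < β →
        ∀ (m : ℕ) (a v : Fin m → Esp n),
          (∀ i, ‖v i‖ = 1) →
          (∀ i j, i ≠ j → δ ≤ ‖v i - v j‖) →
        ∀ (W : Set (Esp n)), MaximalSeparated n β W →
        ∀ (ω : Fin m → Esp n), (∀ i, ω i ∈ W ∧ ‖v i - ω i‖ < β) →
        ∀ (b : ℕ → Esp n), FinOverlapCover n δ b →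
          broadNorm n k A p β δ W (fun i => tube n δ (a i) (v i)) ω b Set.univ ≤
            ENNReal.ofReal (Cβ * δ ^ (-((n : ℝ) - 1 - (n : ℝ) / p) - ε)) *
              (∑ i, volume (tube n δ (a i) (v i))) ^ (1 / p)) :
    ∃ C : ℝ, 0 < C ∧
      ∀ (δ : ℝ), 0 < δ → δ < 1 →
      ∀ (m : ℕ) (a v : Fin m → Esp n),
        (∀ i, ‖v i‖ = 1) →
        (∀ i j, i ≠ j → δ ≤ ‖v i - v j‖) →
        eLpNorm (fun x => ∑ i, Set.indicator (tube n δ (a i) (v i)) (fun _ => (1 : ℝ)) x)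
            (ENNReal.ofReal p) volume ≤
          ENNReal.ofReal (C * δ ^ (-((n : ℝ) - 1 - (n : ℝ) / p) - ε)) *
            (∑ i, volume (tube n δ (a i) (v i))) ^ (1 / p) := by
  exact statement4_general hk2 hkn (one_le_of_criticalExponent_le (Nat.cast_le.2 hkn) hp)
    (mul_lossExponent_lt (Nat.cast_le.2 hkn) hε hp) A hbroad

end
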